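/- arXiv:2401.10847 — 2 statements merged into one kernel-verified Lean document; each statement's English description precedes it below -/
import Mathlib

section
/- For every non-empty compact set K of non-negative real numbers, there exists a non-empty family 𝓕 of finite graphs, each having at least one edge, such that the set of accumulation points of the sequence (sat(n,𝓕)/n)_{n ≥ 1} is exactly K. -/
open SimpleGraph Filter Topology

/-- `H` (on `β`) is contained in `G` (on `α`): `G` has a subgraph isomorphic to `H`. -/
def Contains {α β : Type*} (G : SimpleGraph α) (H : SimpleGraph β) : Prop :=
  ∃ f : β ↪ α, ∀ a b : β, H.Adj a b → G.Adj (f a) (f b)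

/-- A family of finite graphs, each given on a vertex set `Fin n`. -/
abbrev GraphFam := Set ((n : ℕ) × SimpleGraph (Fin n))

/-- `G` is `𝓕`-saturated: `G` contains no member of `𝓕`, but adding any missing edge to `G`
creates a member of `𝓕`. -/
def FamSaturated (𝓕 : GraphFam) {α : Type*} (G : SimpleGraph α) : Prop :=
  (∀ F ∈ 𝓕, ¬ Contains G F.2) ∧
    ∀ u v : α, u ≠ v → ¬ G.Adj u v →
      ∃ F ∈ 𝓕, Contains (G ⊔ SimpleGraph.fromEdgeSet {s(u, v)}) F.2

/-- `sat n 𝓕` is the minimum number of edges in an `𝓕`-saturated graph on `n` vertices. -/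
noncomputable def sat (n : ℕ) (𝓕 : GraphFam) : ℕ :=
  sInf {m | ∃ G : SimpleGraph (Fin n), FamSaturated 𝓕 G ∧ Nat.card G.edgeSet = m}

theorem Contains.trans {α β γ : Type*} {G : SimpleGraph α} {H : SimpleGraph β}
    {I : SimpleGraph γ} (h₁ : Contains G H) (h₂ : Contains H I) : Contains G I := by
  obtain ⟨f, hf⟩ := h₁
  obtain ⟨g, hg⟩ := h₂
  exact ⟨g.trans f, fun a b hab => hf _ _ (hg _ _ hab)⟩

theorem Contains.of_le {α : Type*} {G H : SimpleGraph α} (h : H ≤ G) : Contains G H :=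
  ⟨Function.Embedding.refl α, fun _ _ hab => h hab⟩

theorem Contains.of_embedding {α β : Type*} {G : SimpleGraph α} {H : SimpleGraph β}
    (f : H ↪g G) : Contains G H :=
  ⟨f.toEmbedding, fun _ _ hab => f.map_rel_iff.2 hab⟩

/-- A graph contained in a finite graph has at most as many edges. -/
theorem Contains.card_edgeSet_le {α β : Type*} [Finite α] {G : SimpleGraph α}
    {H : SimpleGraph β} (h : Contains G H) : Nat.card H.edgeSet ≤ Nat.card G.edgeSet := by
  obtain ⟨f, hf⟩ := h
  let φ : H →g G := ⟨f, fun {a b} hab => hf a b hab⟩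
  exact Nat.card_le_card_of_injective φ.mapEdgeSet
    (SimpleGraph.Hom.mapEdgeSet.injective φ f.injective)

theorem card_edgeSet_lt_of_lt {α : Type*} [Finite α] {G H : SimpleGraph α} (h : G < H) :
    Nat.card G.edgeSet < Nat.card H.edgeSet := by
  rw [Nat.card_coe_set_eq, Nat.card_coe_set_eq]
  exact Set.ncard_lt_ncard (SimpleGraph.edgeSet_ssubset_edgeSet.2 h) (Set.toFinite _)

theorem lt_sup_fromEdgeSet {α : Type*} {G : SimpleGraph α} {u v : α} (hne : u ≠ v)
    (huv : ¬ G.Adj u v) : G < G ⊔ SimpleGraph.fromEdgeSet {s(u, v)} := by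
  refine lt_of_le_not_ge le_sup_left fun h => huv (h ?_)
  simp [hne]

/-- If adding the edge `uv` creates a copy of a graph with minimum degree at least `d + 1`, then
`u` already had degree at least `d`. -/
theorem le_ncard_neighborSet_of_contains_sup {α β : Type*} [Finite α] {G : SimpleGraph α}
    {Y : SimpleGraph β} {d : ℕ} (hY : ∀ b, d + 1 ≤ (Y.neighborSet b).ncard)
    (hG : ¬ Contains G Y) {u v : α}
    (h : Contains (G ⊔ SimpleGraph.fromEdgeSet {s(u, v)}) Y) :
    d ≤ (G.neighborSet u).ncard := by
  obtain ⟨f, hf⟩ := h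
  have hu : ∃ a, f a = u := by
    by_contra! hcon
    refine hG ⟨f, fun a b hab => ?_⟩
    have := hf a b hab
    simp only [SimpleGraph.sup_adj, SimpleGraph.fromEdgeSet_adj, Set.mem_singleton_iff,
      Sym2.eq_iff] at this
    have ha := hcon a
    have hb := hcon b
    tauto
  obtain ⟨a, rfl⟩ := hu
  have hsub : f '' Y.neighborSet a ⊆ insert v (G.neighborSet (f a)) := by
    rintro _ ⟨b, hb, rfl⟩
    have := hf a b hb
    simp only [SimpleGraph.sup_adj, SimpleGraph.fromEdgeSet_adj, Set.mem_singleton_iff,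
      Sym2.eq_iff] at this
    simp only [Set.mem_insert_iff, SimpleGraph.mem_neighborSet]
    tauto
  have h1 := Set.ncard_le_ncard hsub (Set.toFinite _)
  rw [Set.ncard_image_of_injective _ f.injective] at h1
  have h2 := Set.ncard_insert_le v (G.neighborSet (f a))
  have h3 := hY a
  omega

theorem sum_ncard_neighborSet {α : Type*} [Fintype α] (G : SimpleGraph α) :
    ∑ v, (G.neighborSet v).ncard = 2 * Nat.card G.edgeSet := by
  classical
  rw [Nat.card_eq_fintype_card, ← SimpleGraph.edgeFinset_card,
    ← SimpleGraph.sum_degrees_eq_twice_card_edges]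
  refine Finset.sum_congr rfl fun v _ => ?_
  rw [← Nat.card_coe_set_eq, Nat.card_eq_fintype_card, SimpleGraph.card_neighborSet_eq_degree]

/-- The graphs that contain one of the markers `Y j`, where `N ≤ j` is at most the number of
vertices, and that are not contained in the prescribed graph `G n` on the same number of
vertices. -/
def markedFamily {V : ℕ → Type} (Y : ∀ n, SimpleGraph (V n)) (G : ∀ n, SimpleGraph (Fin n))
    (N : ℕ) : GraphFam :=
  {F | (∃ j, N ≤ j ∧ j ≤ F.1 ∧ Contains F.2 (Y j)) ∧ ¬ Contains (G F.1) F.2}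

section markedFamily

variable {V : ℕ → Type} {Y : ∀ n, SimpleGraph (V n)} {G : ∀ n, SimpleGraph (Fin n)} {N : ℕ}

theorem one_le_card_edgeSet_of_mem_markedFamily {F : (n : ℕ) × SimpleGraph (Fin n)}
    (hF : F ∈ markedFamily Y G N) : 1 ≤ Nat.card F.2.edgeSet := by
  by_contra! h
  have h0 : Nat.card F.2.edgeSet = 0 := by omega
  rw [Nat.card_coe_set_eq, Set.ncard_eq_zero, SimpleGraph.edgeSet_eq_empty] at h0
  exact hF.2 (Contains.of_le (by rw [h0]; exact bot_le))

theorem markedFamily_free_iff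
    (hnot : ∀ n j, N ≤ j → j < n → ¬ Contains (G n) (Y j)) {n : ℕ} (M : SimpleGraph (Fin n)) :
    (∀ F ∈ markedFamily Y G N, ¬ Contains M F.2) ↔
      Contains (G n) M ∨ ∀ j, N ≤ j → j ≤ n → ¬ Contains M (Y j) := by
  constructor
  · intro h
    by_contra! hcon
    obtain ⟨h1, j, hj, hjn, h2⟩ := hcon
    exact h ⟨n, M⟩ ⟨⟨j, hj, hjn, h2⟩, h1⟩ (Contains.of_le le_rfl)
  · rintro h ⟨m, F⟩ ⟨⟨j, hj, hjm, hFY⟩, hGF⟩ hMF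
    have hmn : m ≤ n := by
      obtain ⟨f, -⟩ := hMF
      simpa using Fintype.card_le_of_embedding f
    rcases h with h | h
    · rcases hmn.eq_or_lt with rfl | hlt
      · exact hGF (h.trans hMF)
      · exact hnot n j hj (hjm.trans_lt hlt) (h.trans (hMF.trans hFY))
    · exact h j hj (hjm.trans hmn) (hMF.trans hFY)

/-- If `G n` contains the `n`-th marker but no earlier one, and has at most as many edges as
forced by the minimum degree of the markers, then it is an optimal saturated graph. -/
theorem sat_markedFamily {d : ℕ} (hY : ∀ j b, d + 1 ≤ ((Y j).neighborSet b).ncard)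
    (hcont : ∀ n, N ≤ n → Contains (G n) (Y n))
    (hnot : ∀ n j, N ≤ j → j < n → ¬ Contains (G n) (Y j)) {n : ℕ} (hn : N ≤ n) (hd : d < n)
    (hedge : 2 * Nat.card (G n).edgeSet ≤ d * n) :
    sat n (markedFamily Y G N) = Nat.card (G n).edgeSet := by
  have hsat : FamSaturated (markedFamily Y G N) (G n) := by
    refine ⟨(markedFamily_free_iff hnot _).2 (Or.inl (Contains.of_le le_rfl)),
      fun u v hne huv => ?_⟩
    have hlt := lt_sup_fromEdgeSet hne huv
    by_contra! hcon
    rcases (markedFamily_free_iff hnot _).1 hcon with h | h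
    · exact (card_edgeSet_lt_of_lt hlt).not_ge h.card_edgeSet_le
    · exact h n hn le_rfl ((Contains.of_le hlt.le).trans (hcont n hn))
  refine le_antisymm (Nat.sInf_le ⟨G n, hsat, rfl⟩) (le_csInf ⟨_, G n, hsat, rfl⟩ ?_)
  rintro _ ⟨M, hM, rfl⟩
  by_cases hMG : Contains (G n) M
  · obtain ⟨f, hf⟩ := hMG
    have hbij : Function.Bijective f := Finite.injective_iff_bijective.1 f.injective
    refine Contains.card_edgeSet_le ⟨(Equiv.ofBijective f hbij).symm.toEmbedding, ?_⟩
    intro a b hab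
    by_contra hnadj
    obtain ⟨a, rfl⟩ := hbij.2 a
    obtain ⟨b, rfl⟩ := hbij.2 b
    have hnadj' : ¬ M.Adj a b := by simpa using hnadj
    have hne : a ≠ b := fun h => hab.ne (by rw [h])
    obtain ⟨F, hF, hc⟩ := hM.2 a b hne hnadj'
    refine hsat.1 F hF (Contains.trans ⟨f, fun x y hxy => ?_⟩ hc)
    simp only [SimpleGraph.sup_adj, SimpleGraph.fromEdgeSet_adj, Set.mem_singleton_iff,
      Sym2.eq_iff] at hxy
    rcases hxy with hxy | ⟨⟨rfl, rfl⟩ | ⟨rfl, rfl⟩, -⟩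
    · exact hf _ _ hxy
    · exact hab
    · exact hab.symm
  · have hfree := ((markedFamily_free_iff hnot _).1 hM.1).resolve_left hMG
    have hdeg : ∀ u, d ≤ (M.neighborSet u).ncard := by
      intro u
      by_cases hu : ∃ v, u ≠ v ∧ ¬ M.Adj u v
      · obtain ⟨v, hne, huv⟩ := hu
        obtain ⟨F, ⟨⟨j, hj, hjm, hFY⟩, -⟩, hc⟩ := hM.2 u v hne huv
        have hle : F.1 ≤ n := by
          obtain ⟨f, -⟩ := hc
          simpa using Fintype.card_le_of_embedding f
        exact le_ncard_neighborSet_of_contains_sup (hY j) (hfree j hj (hjm.trans hle))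
          (hc.trans hFY)
      · push Not at hu
        have hsub : ({u}ᶜ : Set (Fin n)) ⊆ M.neighborSet u :=
          fun v hv => hu v (fun h => hv h.symm)
        have h1 := Set.ncard_le_ncard hsub (Set.toFinite _)
        rw [Set.ncard_compl, Set.ncard_singleton, Nat.card_eq_fintype_card,
          Fintype.card_fin] at h1
        omega
    have hsum : ∑ _u : Fin n, d ≤ ∑ u, (M.neighborSet u).ncard :=
      Finset.sum_le_sum fun u _ => hdeg u
    rw [sum_ncard_neighborSet, Finset.sum_const, Finset.card_univ, Fintype.card_fin,
      smul_eq_mul, mul_comm] at hsum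
    omega

end markedFamily

/-- In a graph of maximum degree at most `d`, a copy of a connected `d`-regular graph is a
connected component. -/
theorem range_eq_reachable {α β : Type*} [Finite α] {H : SimpleGraph α} {A : SimpleGraph β}
    {d : ℕ} (hH : ∀ x, (H.neighborSet x).ncard ≤ d) (hA : ∀ a, (A.neighborSet a).ncard = d)
    (hconn : A.Preconnected) (f : β ↪ α) (hf : ∀ a b, A.Adj a b → H.Adj (f a) (f b)) (a : β) :
    Set.range f = {x | H.Reachable (f a) x} := by
  have hnbr : ∀ b, f '' A.neighborSet b = H.neighborSet (f b) := by
    intro b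
    refine Set.eq_of_subset_of_ncard_le ?_ ?_ (Set.toFinite _)
    · rintro _ ⟨c, hc, rfl⟩
      exact hf b c hc
    · rw [Set.ncard_image_of_injective _ f.injective, hA]
      exact hH _
  ext x
  constructor
  · rintro ⟨b, rfl⟩
    let φ : A →g H := ⟨f, fun {a b} hab => hf a b hab⟩
    exact (hconn a b).map φ
  · intro hx
    rw [Set.mem_ofPred_eq, SimpleGraph.reachable_iff_reflTransGen] at hx
    induction hx with
    | refl => exact ⟨a, rfl⟩
    | tail _ hadj ih =>
      obtain ⟨b, rfl⟩ := ih
      have := (hnbr b).symm.subset hadj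
      exact Set.image_subset_range _ _ this

theorem card_eq_of_copies_meet {α β γ : Type*} [Finite α] {H : SimpleGraph α}
    {A : SimpleGraph β} {B : SimpleGraph γ} {d : ℕ} (hH : ∀ x, (H.neighborSet x).ncard ≤ d)
    (hA : ∀ a, (A.neighborSet a).ncard = d) (hB : ∀ b, (B.neighborSet b).ncard = d)
    (hAconn : A.Preconnected) (hBconn : B.Preconnected)
    (f : β ↪ α) (hf : ∀ a b, A.Adj a b → H.Adj (f a) (f b))
    (g : γ ↪ α) (hg : ∀ a b, B.Adj a b → H.Adj (g a) (g b)) {a : β} {b : γ} (hab : f a = g b) :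
    Nat.card β = Nat.card γ := by
  have h : Set.range f = Set.range g := by
    rw [range_eq_reachable hH hA hAconn f hf a, range_eq_reachable hH hB hBconn g hg b, hab]
  rw [← Set.ncard_range_of_injective f.injective, h, Set.ncard_range_of_injective g.injective]

/-- The Cartesian product of the cycle of length `m` and the clique on `t` vertices. -/
abbrev cliqueRing (t m : ℕ) : SimpleGraph (Fin m × Fin t) :=
  SimpleGraph.cycleGraph m □ (⊤ : SimpleGraph (Fin t))

theorem cliqueRing_preconnected (t m : ℕ) : (cliqueRing t m).Preconnected :=
  SimpleGraph.cycleGraph_preconnected.boxProd SimpleGraph.preconnected_top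

theorem ncard_neighborSet_cliqueRing {t m : ℕ} (hm : 3 ≤ m) (x : Fin m × Fin t) :
    ((cliqueRing t m).neighborSet x).ncard = t + 1 := by
  classical
  obtain ⟨m, rfl⟩ := Nat.exists_eq_add_of_le' hm
  rw [← Nat.card_coe_set_eq, Nat.card_eq_fintype_card, SimpleGraph.card_neighborSet_eq_degree,
    SimpleGraph.degree_boxProd, SimpleGraph.cycleGraph_degree_three_le,
    SimpleGraph.complete_graph_degree, Fintype.card_fin]
  have := x.2.pos
  omega

theorem ncard_neighborSet_sum_inl {α β : Type*} (G : SimpleGraph α) (H : SimpleGraph β) (v : α) :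
    ((G ⊕g H).neighborSet (Sum.inl v)).ncard = (G.neighborSet v).ncard := by
  rw [SimpleGraph.neighborSet_sum_inl, Set.ncard_image_of_injective _ Sum.inl_injective]

theorem ncard_neighborSet_sum_inr {α β : Type*} (G : SimpleGraph α) (H : SimpleGraph β) (w : β) :
    ((G ⊕g H).neighborSet (Sum.inr w)).ncard = (H.neighborSet w).ncard := by
  rw [SimpleGraph.neighborSet_sum_inr, Set.ncard_image_of_injective _ Sum.inr_injective]

theorem card_edgeSet_sum {α β : Type*} [Finite α] [Finite β] (G : SimpleGraph α)
    (H : SimpleGraph β) :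
    Nat.card (G ⊕g H).edgeSet = Nat.card G.edgeSet + Nat.card H.edgeSet := by
  rw [Nat.card_congr SimpleGraph.edgeSetSumEquiv, Nat.card_sum]

/-- Two clique rings, whose lengths have different parities and encode `n`. -/
abbrev marker (t n : ℕ) :
    SimpleGraph ((Fin (2 * n.unpair.1 + 4) × Fin t) ⊕ (Fin (2 * n.unpair.2 + 5) × Fin t)) :=
  cliqueRing t (2 * n.unpair.1 + 4) ⊕g cliqueRing t (2 * n.unpair.2 + 5)

theorem ncard_neighborSet_marker (t n : ℕ)
    (x : (Fin (2 * n.unpair.1 + 4) × Fin t) ⊕ (Fin (2 * n.unpair.2 + 5) × Fin t)) :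
    ((marker t n).neighborSet x).ncard = t + 1 := by
  rcases x with x | x
  · rw [ncard_neighborSet_sum_inl, ncard_neighborSet_cliqueRing (by omega)]
  · rw [ncard_neighborSet_sum_inr, ncard_neighborSet_cliqueRing (by omega)]

theorem two_mul_card_edgeSet_marker (t n : ℕ) :
    2 * Nat.card (marker t n).edgeSet =
      (2 * n.unpair.1 + 2 * n.unpair.2 + 9) * t * (t + 1) := by
  rw [← sum_ncard_neighborSet, Finset.sum_congr rfl fun x _ => ncard_neighborSet_marker t n x]
  simp only [Finset.sum_const, Finset.card_univ, Fintype.card_sum, Fintype.card_prod,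
    Fintype.card_fin, smul_eq_mul]
  ring

/-- A disjoint union of a marker with a graph of smaller degrees contains no other marker. -/
theorem eq_of_contains_marker {α : Type*} [Finite α] {W : SimpleGraph α} {t n j : ℕ}
    (ht : 0 < t) (hW : ∀ x, (W.neighborSet x).ncard ≤ t)
    (h : Contains (marker t n ⊕g W) (marker t j)) : j = n := by
  obtain ⟨f, hf⟩ := h
  have hH : ∀ x, ((marker t n ⊕g W).neighborSet x).ncard ≤ t + 1 := by
    rintro (x | x)
    · rw [ncard_neighborSet_sum_inl, ncard_neighborSet_marker]
    · rw [ncard_neighborSet_sum_inr]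
      exact (hW x).trans (Nat.le_succ t)
  have hring : ∀ (m : ℕ), 3 ≤ m → ∀ g : Fin m × Fin t ↪ _,
      (∀ a b, (cliqueRing t m).Adj a b → (marker t n ⊕g W).Adj (g a) (g b)) →
      m = 2 * n.unpair.1 + 4 ∨ m = 2 * n.unpair.2 + 5 := by
    intro m hm g hg
    have key : ∀ k, 3 ≤ k → ∀ e : cliqueRing t k ↪g marker t n ⊕g W, ∀ a b, g a = e b →
        m = k := by
      intro k hk e a b hab
      have := card_eq_of_copies_meet hH (ncard_neighborSet_cliqueRing hm)
        (ncard_neighborSet_cliqueRing hk) (cliqueRing_preconnected t m)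
        (cliqueRing_preconnected t k) g hg e.toEmbedding
        (fun _ _ hab => e.map_rel_iff.2 hab) hab
      simpa [ht.ne'] using this
    rcases hx : g (⟨0, by omega⟩, ⟨0, ht⟩) with (x | x) | x
    · exact Or.inl (key _ (by omega)
        (SimpleGraph.Embedding.sumInl.comp SimpleGraph.Embedding.sumInl) _ x hx)
    · exact Or.inr (key _ (by omega)
        (SimpleGraph.Embedding.sumInl.comp SimpleGraph.Embedding.sumInr) _ x hx)
    · have hsub : g '' (cliqueRing t m).neighborSet (⟨0, by omega⟩, ⟨0, ht⟩) ⊆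
          (marker t n ⊕g W).neighborSet (Sum.inr x) := by
        rintro _ ⟨b, hb, rfl⟩
        rw [← hx]
        exact hg _ _ hb
      have h1 := Set.ncard_le_ncard hsub (Set.toFinite _)
      rw [Set.ncard_image_of_injective _ g.injective, ncard_neighborSet_cliqueRing hm,
        ncard_neighborSet_sum_inr] at h1
      have := hW x
      omega
  have h1 := hring _ (by omega) (Function.Embedding.inl.trans f)
    (fun a b hab => hf _ _ (SimpleGraph.sum_adj_inl.2 hab))
  have h2 := hring _ (by omega) (Function.Embedding.inr.trans f)
    (fun a b hab => hf _ _ (SimpleGraph.sum_adj_inr.2 hab))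
  rw [← Nat.pair_unpair j, ← Nat.pair_unpair n]
  congr 1 <;> omega

/-- There are graphs with maximum degree at most `2 * s` and any prescribed number of edges up to
`(w - s) * s`. -/
theorem exists_graph_card_edgeSet {s w e : ℕ} (he : e ≤ (w - s) * s) :
    ∃ W : SimpleGraph (Fin w), (∀ v, (W.neighborSet v).ncard ≤ 2 * s) ∧
      Nat.card W.edgeSet = e := by
  classical
  let g : Fin (w - s) × Fin s → Sym2 (Fin w) := fun p =>
    s(⟨p.1, by omega⟩, ⟨p.1 + 1 + p.2, by omega⟩)
  have hg : Function.Injective g := by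
    rintro ⟨i, j⟩ ⟨i', j'⟩ h
    simp only [g, Sym2.eq_iff, Fin.mk.injEq] at h
    ext <;> simp only <;> omega
  obtain ⟨T, hT, hcard⟩ := Finset.exists_subset_card_eq
    (s := Finset.univ.image g) (n := e)
    (by rw [Finset.card_image_of_injective _ hg]; simpa using he)
  refine ⟨SimpleGraph.fromEdgeSet T, fun v => ?_, ?_⟩
  · have hsub : Fin.val '' (SimpleGraph.fromEdgeSet (T : Set (Sym2 (Fin w)))).neighborSet v ⊆
        ((Finset.Icc (v.val - s) (v.val + s)).erase v.val : Finset ℕ) := by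
      rintro _ ⟨u, hu, rfl⟩
      simp only [SimpleGraph.mem_neighborSet, SimpleGraph.fromEdgeSet_adj] at hu
      obtain ⟨⟨i, j⟩, -, hij⟩ := Finset.mem_image.1 (hT hu.1)
      simp only [g, Sym2.eq_iff, Fin.ext_iff] at hij
      simp only [Finset.coe_erase, Set.mem_sdiff, Finset.mem_coe, Finset.mem_Icc,
        Set.mem_singleton_iff]
      omega
    have h1 := Set.ncard_le_ncard hsub (Finset.finite_toSet _)
    rw [Set.ncard_image_of_injective _ Fin.val_injective, Set.ncard_coe_finset,
      Finset.card_erase_of_mem (by simp), Nat.card_Icc] at h1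
    omega
  · rw [SimpleGraph.edgeSet_fromEdgeSet, Nat.card_coe_set_eq, sdiff_eq_left.2, Set.ncard_coe_finset,
      hcard]
    rw [Set.disjoint_left]
    intro x hx hdiag
    obtain ⟨⟨i, j⟩, -, rfl⟩ := Finset.mem_image.1 (hT hx)
    simp [g, Fin.ext_iff] at hdiag
    omega

theorem exists_marked_graph {s n e : ℕ} (hs : 0 < s)
    (hn : (2 * n.unpair.1 + 2 * n.unpair.2 + 9) * (2 * s) ≤ n)
    (he : e ≤ (n - (2 * n.unpair.1 + 2 * n.unpair.2 + 9) * (2 * s) - s) * s) :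
    ∃ G : SimpleGraph (Fin n), Contains G (marker (2 * s) n) ∧
      (∀ j < n, ¬ Contains G (marker (2 * s) j)) ∧
      Nat.card G.edgeSet = Nat.card (marker (2 * s) n).edgeSet + e := by
  obtain ⟨W, hW, hcard⟩ := exists_graph_card_edgeSet he
  have hfin : Fintype.card (((Fin (2 * n.unpair.1 + 4) × Fin (2 * s)) ⊕
      (Fin (2 * n.unpair.2 + 5) × Fin (2 * s))) ⊕
      Fin (n - (2 * n.unpair.1 + 2 * n.unpair.2 + 9) * (2 * s))) = Fintype.card (Fin n) := by
    simp only [Fintype.card_sum, Fintype.card_prod, Fintype.card_fin]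
    rw [← add_mul, show 2 * n.unpair.1 + 4 + (2 * n.unpair.2 + 5) =
      2 * n.unpair.1 + 2 * n.unpair.2 + 9 by omega]
    omega
  let i := SimpleGraph.Iso.map (Fintype.equivOfCardEq hfin) (marker (2 * s) n ⊕g W)
  refine ⟨_, (Contains.of_embedding i.toEmbedding).trans
    (Contains.of_embedding SimpleGraph.Embedding.sumInl), fun j hj hc => ?_, ?_⟩
  · exact hj.ne (eq_of_contains_marker (by omega) hW
      ((Contains.of_embedding i.symm.toEmbedding).trans hc))
  · rw [← Nat.card_congr i.mapEdgeSet, card_edgeSet_sum, hcard]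

theorem unpair_le_sqrt (n : ℕ) : n.unpair.1 ≤ n.sqrt ∧ n.unpair.2 ≤ n.sqrt := by
  have h := Nat.sqrt_le_add n
  unfold Nat.unpair
  dsimp only
  split_ifs <;> constructor <;> simp only <;> omega

theorem eventually_unpair_mul_le (C : ℕ) :
    ∀ᶠ n : ℕ in atTop, (2 * n.unpair.1 + 2 * n.unpair.2 + 9) * C ≤ n := by
  filter_upwards [eventually_ge_atTop ((13 * C + 1) * (13 * C + 1))] with n hn
  obtain ⟨h1, h2⟩ := unpair_le_sqrt n
  have h3 : 13 * C + 1 ≤ n.sqrt := Nat.le_sqrt.2 hn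
  calc (2 * n.unpair.1 + 2 * n.unpair.2 + 9) * C ≤ (13 * n.sqrt) * C :=
        Nat.mul_le_mul_right _ (by omega)
    _ = n.sqrt * (13 * C) := by ring
    _ ≤ n.sqrt * n.sqrt := Nat.mul_le_mul_left _ (by omega)
    _ ≤ n := Nat.sqrt_le n

theorem tendsto_card_edgeSet_marker_div (t : ℕ) :
    Tendsto (fun n : ℕ => (Nat.card (marker t n).edgeSet : ℝ) / n) atTop (𝓝 0) := by
  rw [Metric.tendsto_nhds]
  intro ε hε
  obtain ⟨k, hk⟩ := exists_nat_gt (1 / ε)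
  filter_upwards [eventually_unpair_mul_le (t * (t + 1) * k), eventually_gt_atTop 0] with n hn h0
  have h1 : Nat.card (marker t n).edgeSet * k ≤ n := by
    have h2 := two_mul_card_edgeSet_marker t n
    calc Nat.card (marker t n).edgeSet * k ≤ 2 * Nat.card (marker t n).edgeSet * k :=
          Nat.mul_le_mul_right _ (by omega)
      _ = (2 * n.unpair.1 + 2 * n.unpair.2 + 9) * (t * (t + 1) * k) := by rw [h2]; ring
      _ ≤ n := hn
  have h1' : (Nat.card (marker t n).edgeSet : ℝ) * k ≤ n := by exact_mod_cast h1
  have hn0 : (0 : ℝ) < n := by exact_mod_cast h0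
  have hk0 : (0 : ℝ) < k := (by positivity : (0 : ℝ) < 1 / ε).trans hk
  rw [dist_zero_right, Real.norm_of_nonneg (by positivity), div_lt_iff₀ hn0]
  rw [div_lt_iff₀ hε] at hk
  nlinarith

/-- A sequence asymptotic to one that visits every term of a dense sequence of a closed set
infinitely often accumulates exactly at the points of that set. -/
theorem setOf_accumulation_eq {K : Set ℝ} (hK : IsClosed K) {q : ℕ → K} (hq : DenseRange q)
    {u : ℕ → ℝ} (hu : Tendsto (fun n => u n - q n.unpair.1) atTop (𝓝 0)) :
    {x : ℝ | ∃ φ : ℕ → ℕ, StrictMono φ ∧ (∀ k, 1 ≤ φ k) ∧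
      Tendsto (fun k => u (φ k)) atTop (𝓝 x)} = K := by
  ext x
  constructor
  · rintro ⟨φ, hφ, -, hx⟩
    have h := hx.sub (hu.comp hφ.tendsto_atTop)
    rw [sub_zero] at h
    refine hK.mem_of_tendsto h (Eventually.of_forall fun k => ?_)
    simp
  · intro hx
    have hcl : MapClusterPt x atTop u := by
      rw [mapClusterPt_iff_frequently]
      intro s hs
      obtain ⟨ε, hε, hball⟩ := Metric.mem_nhds_iff.1 hs
      obtain ⟨i, hi⟩ := hq.exists_dist_lt ⟨x, hx⟩ (half_pos hε)
      have hfreq : ∃ᶠ n : ℕ in atTop, n.unpair.1 = i :=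
        frequently_atTop.2 fun N => ⟨Nat.pair i N, Nat.right_le_pair i N, by simp⟩
      refine (hfreq.and_eventually (Metric.tendsto_nhds.1 hu _ (half_pos hε))).mono ?_
      rintro n ⟨rfl, hn⟩
      apply hball
      rw [Subtype.dist_eq, Real.dist_eq, abs_lt] at hi
      rw [Real.dist_eq, abs_lt] at hn
      rw [Metric.mem_ball, Real.dist_eq, abs_lt]
      constructor <;> linarith [hi.1, hi.2, hn.1, hn.2]
    obtain ⟨φ, hφ, hlim⟩ := hcl.tendsto_subseq
    refine ⟨fun k => φ (k + 1), fun a b hab => hφ (by omega), fun k => ?_,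
      hlim.comp (tendsto_add_atTop_nat 1)⟩
    exact (Nat.le_add_left 1 k).trans hφ.le_apply

/-- For every non-empty compact set `K` of non-negative reals there is a family `𝓕` such that the
set of accumulation points of `(sat(n,𝓕)/n)_{n ≥ 1}` is exactly `K`. -/
theorem stmt8 (K : Set ℝ) (hne : K.Nonempty) (hcpt : IsCompact K) (hpos : ∀ x ∈ K, 0 ≤ x) :
    ∃ 𝓕 : GraphFam, 𝓕.Nonempty ∧ (∀ F ∈ 𝓕, 1 ≤ Nat.card F.2.edgeSet) ∧
      {x : ℝ | ∃ φ : ℕ → ℕ, StrictMono φ ∧ (∀ k, 1 ≤ φ k) ∧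
        Tendsto (fun k => (sat (φ k) 𝓕 : ℝ) / (φ k : ℝ)) atTop (𝓝 x)} = K := by
  have : Nonempty K := hne.to_subtype
  obtain ⟨B, hB⟩ := hcpt.bddAbove
  obtain ⟨A, hA⟩ := exists_nat_ge B
  let s := A + 1
  let q := TopologicalSpace.denseSeq K
  let e : ℕ → ℕ := fun n => ⌊(q n.unpair.1 : ℝ) * n⌋₊
  have hq0 : ∀ i, 0 ≤ (q i : ℝ) := fun i => hpos _ (q i).2
  have he : ∀ n, e n ≤ A * n := by
    intro n
    have h : (e n : ℝ) ≤ (A : ℝ) * n :=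
      (Nat.floor_le (mul_nonneg (hq0 _) n.cast_nonneg)).trans
        (mul_le_mul_of_nonneg_right ((hB (q _).2).trans hA) n.cast_nonneg)
    exact_mod_cast h
  obtain ⟨N, hN⟩ := eventually_atTop.1
    (eventually_unpair_mul_le (2 * s * s + s * s + 2 * s * (2 * s + 1)))
  have hG : ∀ n, ∃ G : SimpleGraph (Fin n), N ≤ n → Contains G (marker (2 * s) n) ∧
      (∀ j < n, ¬ Contains G (marker (2 * s) j)) ∧
      Nat.card G.edgeSet = Nat.card (marker (2 * s) n).edgeSet + e n := by
    intro n
    by_cases hn : N ≤ n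
    swap
    · exact ⟨⊥, fun h => absurd h hn⟩
    have h := hN n hn
    set c := 2 * n.unpair.1 + 2 * n.unpair.2 + 9 with hc
    have hs : 1 ≤ s := by omega
    have h1 : (c * (2 * s) + s) * s ≤ n := by
      have hc1 : 1 ≤ c := by omega
      nlinarith [Nat.zero_le (c * s * s)]
    have h2 : c * (2 * s) + s ≤ n := (Nat.le_mul_of_pos_right _ hs).trans h1
    obtain ⟨G, hG⟩ := exists_marked_graph (s := s) (n := n) (e := e n) hs (by rw [← hc]; omega) (by
      rw [Nat.sub_sub, ← hc, Nat.sub_mul]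
      have := he n
      have hsn : n * s = A * n + n := by ring
      omega)
    exact ⟨G, fun _ => hG⟩
  choose G hG using hG
  have hbig : ∀ n, N ≤ n → 2 * s + 1 < n := by
    intro n hn
    have h := hN n hn
    have hs : 1 ≤ s := by omega
    nlinarith [Nat.zero_le (n.unpair.1 * s * s), Nat.zero_le (n.unpair.2 * s * s),
      Nat.zero_le (n.unpair.1 * s), Nat.zero_le (n.unpair.2 * s)]
  have hedge : ∀ n, N ≤ n → 2 * Nat.card (G n).edgeSet ≤ 2 * s * n := by
    intro n hn
    rw [(hG n hn).2.2, mul_add, two_mul_card_edgeSet_marker]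
    have h1 := he n
    have h2 := hN n hn
    have h3 : (2 * n.unpair.1 + 2 * n.unpair.2 + 9) * (2 * s) * (2 * s + 1) ≤ n :=
      le_trans (by rw [mul_assoc]; exact Nat.mul_le_mul_left _ (by omega)) h2
    have hsn : 2 * s * n = 2 * (A * n) + 2 * n := by ring
    omega
  have hsat : ∀ n, N ≤ n → sat n (markedFamily (marker (2 * s)) G N) =
      Nat.card (marker (2 * s) n).edgeSet + e n := by
    intro n hn
    rw [sat_markedFamily (d := 2 * s) (fun j b => (ncard_neighborSet_marker _ _ _).ge)
      (fun n hn => (hG n hn).1) (fun n j hj hjn => (hG n (hj.trans hjn.le)).2.1 j hjn) hn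
      ((Nat.le_succ _).trans_lt (hbig n hn)) (hedge n hn), (hG n hn).2.2]
  refine ⟨markedFamily (marker (2 * s)) G N, ⟨⟨N, ⊤⟩, ⟨N, le_rfl, le_rfl, ?_⟩, fun h => ?_⟩,
    fun F hF => one_le_card_edgeSet_of_mem_markedFamily hF,
    setOf_accumulation_eq
      (u := fun n => (sat n (markedFamily (marker (2 * s)) G N) : ℝ) / n) hcpt.isClosed
      (TopologicalSpace.denseRange_denseSeq K) ?_⟩
  · exact (Contains.of_le le_top).trans (hG N le_rfl).1
  · have h1 : Nat.card (⊤ : SimpleGraph (Fin N)).edgeSet ≤ Nat.card (G N).edgeSet :=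
      h.card_edgeSet_le
    have h2 := hedge N le_rfl
    have h3 := hbig N le_rfl
    have h4 : N * (N - 1) = 2 * Nat.card (⊤ : SimpleGraph (Fin N)).edgeSet := by
      rw [← sum_ncard_neighborSet, Finset.sum_congr rfl fun v _ => by
        rw [SimpleGraph.neighborSet_top, Set.ncard_compl, Set.ncard_singleton]]
      simp
    have h5 : 2 * s * N < N * (N - 1) := by
      rw [mul_comm]
      exact Nat.mul_lt_mul_of_pos_left (by omega) (by omega)
    omega
  · have hlow : Tendsto (fun n : ℕ => -(1 / (n : ℝ))) atTop (𝓝 0) := by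
      simpa using (tendsto_one_div_atTop_nhds_zero_nat (𝕜 := ℝ)).neg
    refine tendsto_of_tendsto_of_tendsto_of_le_of_le' hlow
      (tendsto_card_edgeSet_marker_div (2 * s)) ?_ ?_
    all_goals
      filter_upwards [eventually_ge_atTop N, eventually_gt_atTop 0] with n hn h0
      have hn0 : (0 : ℝ) < n := by exact_mod_cast h0
      have hfloor := Nat.floor_le (mul_nonneg (hq0 n.unpair.1) n.cast_nonneg)
      have hlt := Nat.lt_floor_add_one ((q n.unpair.1 : ℝ) * n)
      rw [hsat n hn, Nat.cast_add]
    · rw [le_sub_iff_add_le, le_div_iff₀ hn0, add_mul, neg_mul, one_div_mul_cancel hn0.ne']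
      have := (Nat.card (marker (2 * s) n).edgeSet).cast_nonneg (α := ℝ)
      simp only [e, q] at *
      linarith
    · rw [sub_le_iff_le_add, div_le_iff₀ hn0, add_mul, div_mul_cancel₀ _ hn0.ne']
      simp only [e, q] at *
      linarith
end

section
/- Let 𝓕 be a non-empty quasi-finite family of finite graphs, each having at least one edge. Then for each integer r ≥ 1 there exists a set S_r of residue classes modulo r (each residue class viewed as a subset of the non-negative integers), and for each class C ∈ S_r an integer k_C, such that: (a) for every integer r ≥ 1 and every class C ∈ S_r, sat(n,𝓕) = ((r−1)·n + k_C)/r for all sufficiently large n that lie in C but lie in no class D ∈ S_q for any q < r; (b) there is a function g : ℤ_{≥0} → ℝ with g(n)/n → 0 such that sat(n,𝓕) ≥ n − g(n) for every n ≥ 0 that lies in no class of any S_r; (c) for each r ∈ {1,2,3,4,5,7}, S_r is either empty or consists of all r residue classes modulo r. -/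
open SimpleGraph Filter Topology

/-- `𝓕` is quasi-finite: for every tree `T` there is a constant `C` such that every graph in `𝓕`
has at most `C` connected components isomorphic to `T`. -/
def QuasiFinite (𝓕 : GraphFam) : Prop :=
  ∀ (t : ℕ) (T : SimpleGraph (Fin t)), T.IsTree →
    ∃ C : ℕ, ∀ F ∈ 𝓕,
      Nat.card {c : F.2.ConnectedComponent // Nonempty (SimpleGraph.induce c.supp F.2 ≃g T)} ≤ C

/-- `C` is a residue class modulo `r`, viewed as a subset of the non-negative integers. -/
def ResidueClass (r : ℕ) (C : Set ℕ) : Prop := ∃ c < r, C = {n : ℕ | n % r = c}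

section Containment

variable {V V' W : Type*}

/-- `G` contains no member of `𝓕`. -/
def FamFree (𝓕 : GraphFam) (G : SimpleGraph V) : Prop := ∀ F ∈ 𝓕, ¬ Contains G F.2

theorem Contains.trans_injective {G : SimpleGraph V} {G' : SimpleGraph V'} {H : SimpleGraph W}
    (h : Contains G H) (f : V → V') (hf : Function.Injective f)
    (hadj : ∀ a b, G.Adj a b → G'.Adj (f a) (f b)) : Contains G' H := by
  obtain ⟨e, he⟩ := h
  exact ⟨e.trans ⟨f, hf⟩, fun a b hab => hadj _ _ (he a b hab)⟩

theorem FamSaturated.of_iso {𝓕 : GraphFam} {G : SimpleGraph V} {G' : SimpleGraph V'}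
    (h : FamSaturated 𝓕 G) (e : G ≃g G') : FamSaturated 𝓕 G' := by
  refine ⟨fun F hF hc => h.1 F hF
    (hc.trans_injective e.symm e.symm.injective fun a b => e.symm.map_adj_iff.2), ?_⟩
  intro u v huv hadj
  obtain ⟨F, hF, hc⟩ := h.2 (e.symm u) (e.symm v) (by simpa using huv)
    (fun hh => hadj (e.symm.map_adj_iff.1 hh))
  refine ⟨F, hF, hc.trans_injective e e.injective fun a b hab => ?_⟩
  simp only [sup_adj, fromEdgeSet_adj, Set.mem_singleton_iff, Sym2.eq_iff, ne_eq] at hab ⊢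
  rcases hab with hab | ⟨⟨rfl, rfl⟩ | ⟨rfl, rfl⟩, hne⟩
  · exact Or.inl (e.map_adj_iff.2 hab)
  · exact Or.inr ⟨Or.inl ⟨by simp, by simp⟩, by simpa using hne⟩
  · exact Or.inr ⟨Or.inr ⟨by simp, by simp⟩, by simpa using hne⟩

/-- Every graph on a finite vertex set containing no member of `𝓕` extends to an `𝓕`-saturated
graph. -/
theorem FamFree.exists_le_famSaturated [Finite V] {𝓕 : GraphFam} {G : SimpleGraph V}
    (h : FamFree 𝓕 G) : ∃ G' : SimpleGraph V, G ≤ G' ∧ FamSaturated 𝓕 G' := by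
  obtain ⟨G', hle, hmax⟩ := (Set.toFinite {H : SimpleGraph V | FamFree 𝓕 H}).exists_le_maximal h
  refine ⟨G', hle, hmax.prop, fun u v huv hadj => ?_⟩
  by_contra! hcon
  have := hmax.le_of_ge (y := G' ⊔ fromEdgeSet {s(u, v)}) hcon le_sup_left
  exact hadj (this (by simp [huv]))

/-- The disjoint union of `G` and copies of `T` indexed by `ι`. -/
abbrev withCopies (G : SimpleGraph V) (T : SimpleGraph W) (ι : Type*) :
    SimpleGraph (V ⊕ ι × W) :=
  G ⊕g ((⊥ : SimpleGraph ι) □ T)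

end Containment

section Components

variable {V : Type*}

theorem card_treeComponents_le [Finite V] (G : SimpleGraph V) (R : ℕ)
    (B : ∀ t, SimpleGraph (Fin t) → ℕ)
    (hB : ∀ t < R, ∀ T : SimpleGraph (Fin t), T.IsTree →
      Nat.card {c : G.ConnectedComponent // Nonempty (G.induce c.supp ≃g T)} ≤ B t T) :
    Nat.card {c : G.ConnectedComponent // (G.induce c.supp).IsTree ∧ Nat.card c.supp < R} ≤
      ∑ t ∈ Finset.range R, ∑ T : SimpleGraph (Fin t), B t T := by
  classical
  have := Fintype.ofFinite G.ConnectedComponent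
  have key : (Finset.univ.filter fun c : G.ConnectedComponent =>
      (G.induce c.supp).IsTree ∧ Nat.card c.supp < R) ⊆
      (Finset.range R).biUnion fun t => (Finset.univ : Finset (SimpleGraph (Fin t))).biUnion
        fun T => Finset.univ.filter fun c => T.IsTree ∧ Nonempty (G.induce c.supp ≃g T) := by
    intro c hc
    simp only [Finset.mem_filter, Finset.mem_univ, true_and] at hc
    have e : c.supp ≃ Fin (Nat.card c.supp) := Finite.equivFin _
    have i : G.induce c.supp ≃g (G.induce c.supp).map e.toEmbedding := Iso.map e _
    simp only [Finset.mem_biUnion, Finset.mem_range, Finset.mem_univ, true_and, Finset.mem_filter]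
    exact ⟨_, hc.2, _, i.isTree_iff.1 hc.1, ⟨i⟩⟩
  rw [Nat.card_eq_fintype_card, Fintype.card_subtype]
  refine (Finset.card_le_card key).trans (Finset.card_biUnion_le.trans ?_)
  refine Finset.sum_le_sum fun t ht => Finset.card_biUnion_le.trans (Finset.sum_le_sum ?_)
  intro T _
  by_cases hT : T.IsTree
  · refine le_trans (le_of_eq ?_) (hB t (Finset.mem_range.1 ht) T hT)
    rw [Nat.card_eq_fintype_card, Fintype.card_subtype]
    simp [hT]
  · simp [hT]

/-- `K` bounds the number of tree components with at most `r` vertices in members of `𝓕`. -/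
def SmallTreeBound (𝓕 : GraphFam) (r K : ℕ) : Prop :=
  ∀ F ∈ 𝓕, Nat.card {c : F.2.ConnectedComponent //
    (F.2.induce c.supp).IsTree ∧ Nat.card c.supp < r + 1} ≤ K

theorem QuasiFinite.exists_smallTreeBound {𝓕 : GraphFam} (h : QuasiFinite 𝓕) (r : ℕ) :
    ∃ K, SmallTreeBound 𝓕 r K := by
  classical
  choose C hC using h
  exact ⟨_, fun F hF => card_treeComponents_le F.2 (r + 1)
    (fun t T => if hT : T.IsTree then C t T hT else 0)
    fun t _ T hT => by simpa [hT] using hC t T hT F hF⟩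

/-- Copies of a small tree are interchangeable: a member of `𝓕` contained in `H` meets at most `K`
of the components `φ (i, ·)`, and these can be moved to the copies `ψ (k, ·)` in `H'`. -/
theorem Contains.relocate {𝓕 : GraphFam} {r K : ℕ} (hK : SmallTreeBound 𝓕 r K)
    {V' ι κ τ : Type*} [Finite τ] [Finite κ] {T : SimpleGraph τ} (hT : T.IsAcyclic)
    (hτ : Nat.card τ ≤ r) {H : SimpleGraph V} {H' : SimpleGraph V'}
    {φ : ι × τ → V} (hφ : Function.Injective φ)
    (hφadj : ∀ i a w, H.Adj (φ (i, a)) w → ∃ b, w = φ (i, b) ∧ T.Adj a b)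
    {ψ : κ × τ → V'} (hψ : Function.Injective ψ)
    (hψadj : ∀ k a b, T.Adj a b → H'.Adj (ψ (k, a)) (ψ (k, b)))
    {g : V → V'} (hg : Set.InjOn g (Set.range φ)ᶜ)
    (hgψ : ∀ x ∉ Set.range φ, g x ∉ Set.range ψ)
    (hgadj : ∀ x y, x ∉ Set.range φ → y ∉ Set.range φ → H.Adj x y → H'.Adj (g x) (g y))
    (hκ : K ≤ Nat.card κ) {F : (n : ℕ) × SimpleGraph (Fin n)} (hF : F ∈ 𝓕)
    (hc : Contains H F.2) : Contains H' F.2 := by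
  classical
  obtain ⟨f, hf⟩ := hc
  have closed : ∀ v w, F.2.Reachable v w → ∀ i a, f v = φ (i, a) → ∃ b, f w = φ (i, b) := by
    rintro v w ⟨p⟩
    induction p with
    | nil => exact fun i a h => ⟨a, h⟩
    | cons hadj _ ih =>
      intro i a h
      obtain ⟨b, hb, -⟩ := hφadj i a _ (h ▸ hf _ _ hadj)
      exact ih i b hb
  let J : Set ι := {i | ∃ v a, f v = φ (i, a)}
  choose v a hva using fun i : J => i.2
  let comp : J → F.2.ConnectedComponent := fun i => F.2.connectedComponentMk (v i)
  have hmem : ∀ (i : J) (w : (comp i).supp), ∃ b, f w = φ (i.1, b) := fun i w =>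
    closed _ _ (ConnectedComponent.exact w.2).symm _ _ (hva i)
  have hcomp : Function.Injective comp := by
    intro i j hij
    obtain ⟨b, hb⟩ := closed _ _ (ConnectedComponent.exact hij) _ _ (hva i)
    have := hφ ((hva j).symm.trans hb)
    exact Subtype.ext (congrArg Prod.fst this).symm
  choose β hβ using hmem
  have hβinj : ∀ i, Function.Injective (β i) := by
    intro i w w' h
    exact Subtype.ext (f.injective ((hβ i w).trans ((congrArg (fun b => φ (i.1, b)) h).trans
      (hβ i w').symm)))
  have hsmall : ∀ i : J, (F.2.induce (comp i).supp).IsTree ∧ Nat.card (comp i).supp < r + 1 := by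
    intro i
    refine ⟨⟨(comp i).connected_toSimpleGraph, ?_⟩, ?_⟩
    · refine IsAcyclic.comap (G' := T) ⟨β i, fun {w w'} hw => ?_⟩ (hβinj i) hT
      have h := hf _ _ hw
      obtain ⟨b, hb, hab⟩ := hφadj i.1 (β i w) (f w') (hβ i w ▸ h)
      have := hφ ((hβ i w').symm.trans hb)
      rw [(Prod.mk.inj this).2]
      exact hab
    · exact Nat.lt_succ_of_le ((Nat.card_le_card_of_injective _ (hβinj i)).trans hτ)
  let comp' : J → {c : F.2.ConnectedComponent //
    (F.2.induce c.supp).IsTree ∧ Nat.card c.supp < r + 1} := fun i => ⟨comp i, hsmall i⟩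
  have hcomp' : Function.Injective comp' := fun i j h => hcomp (congrArg Subtype.val h)
  have hJfin : Finite J := Finite.of_injective _ hcomp'
  have hJκ : Nat.card J ≤ Nat.card κ :=
    ((Nat.card_le_card_of_injective _ hcomp').trans (hK F hF)).trans hκ
  have := Fintype.ofFinite J
  have := Fintype.ofFinite κ
  rw [Nat.card_eq_fintype_card, Nat.card_eq_fintype_card] at hJκ
  obtain ⟨e⟩ := Function.Embedding.nonempty_of_card_le hJκ
  have hsplit : ∀ w, (∃ (i : J) (b : τ), f w = φ (i.1, b)) ∨ f w ∉ Set.range φ := by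
    intro w
    by_cases h : f w ∈ Set.range φ
    · obtain ⟨⟨i, b⟩, hib⟩ := h
      exact Or.inl ⟨⟨i, w, b, hib.symm⟩, b, hib.symm⟩
    · exact Or.inr h
  have hex : ∃ f' : Fin F.1 → V', (∀ w (i : J) b, f w = φ (i.1, b) → f' w = ψ (e i, b)) ∧
      ∀ w, f w ∉ Set.range φ → f' w = g (f w) := by
    refine ⟨fun w => if h : ∃ (i : J) (b : τ), f w = φ (i.1, b)
      then ψ (e h.choose, h.choose_spec.choose) else g (f w), fun w i b h => ?_, fun w h => ?_⟩
    · have hw : ∃ (i : J) (b : τ), f w = φ (i.1, b) := ⟨i, b, h⟩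
      have heq := Prod.mk.inj (hφ (hw.choose_spec.choose_spec.symm.trans h))
      simp only [dif_pos hw]
      rw [heq.2, Subtype.ext heq.1]
    · refine dif_neg ?_
      rintro ⟨i, b, hib⟩
      exact h ⟨_, hib.symm⟩
  obtain ⟨f', hin, hout⟩ := hex
  refine ⟨⟨f', fun w w' h => ?_⟩, fun w w' h => ?_⟩
  · rcases hsplit w with ⟨i, b, hw⟩ | hw <;> rcases hsplit w' with ⟨j, c, hw'⟩ | hw'
    · rw [hin w i b hw, hin w' j c hw'] at h
      obtain ⟨h1, rfl⟩ := Prod.mk.inj (hψ h)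
      obtain rfl := e.injective h1
      exact f.injective (hw.trans hw'.symm)
    · rw [hin w i b hw, hout w' hw'] at h
      exact absurd ⟨_, h⟩ (hgψ _ hw')
    · rw [hin w' j c hw', hout w hw] at h
      exact absurd ⟨_, h.symm⟩ (hgψ _ hw)
    · rw [hout w hw, hout w' hw'] at h
      exact f.injective (hg hw hw' h)
  · have hadj := hf _ _ h
    change H'.Adj (f' w) (f' w')
    rcases hsplit w with ⟨i, b, hw⟩ | hw
    · rw [hw] at hadj
      obtain ⟨c, hw', hbc⟩ := hφadj _ _ _ hadj
      rw [hin w i b hw, hin w' i c hw']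
      exact hψadj _ _ _ hbc
    · rcases hsplit w' with ⟨j, c, hw'⟩ | hw'
      · rw [hw'] at hadj
        obtain ⟨b, hb, -⟩ := hφadj _ _ _ hadj.symm
        exact absurd ⟨_, hb.symm⟩ hw
      · rw [hout w hw, hout w' hw']
        exact hgadj _ _ hw hw' hadj

end Components

section Copies

variable {𝓕 : GraphFam} {r K : ℕ} {α ι κ τ : Type*} {G : SimpleGraph α} {T : SimpleGraph τ}

theorem withCopies_adj_inr {i : ι} {a : τ} {w : α ⊕ ι × τ} :
    (withCopies G T ι).Adj (Sum.inr (i, a)) w ↔ ∃ b, w = Sum.inr (i, b) ∧ T.Adj a b := by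
  rcases w with w | ⟨j, b⟩
  · simp
  · simp only [SimpleGraph.sum_adj, boxProd_adj, bot_adj, false_and, false_or, Sum.inr.injEq,
      Prod.mk.injEq]
    constructor
    · rintro ⟨h, rfl⟩
      exact ⟨b, ⟨rfl, rfl⟩, h⟩
    · rintro ⟨_, ⟨rfl, rfl⟩, h⟩
      exact ⟨h, rfl⟩

theorem withCopies_adj_map {ι' : Type*} (σ : ι → ι') {x y : α ⊕ ι × τ}
    (h : (withCopies G T ι).Adj x y) :
    (withCopies G T ι').Adj (Sum.map id (Prod.map σ id) x) (Sum.map id (Prod.map σ id) y) := by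
  rcases x with x | ⟨i, a⟩
  · rcases y with y | ⟨j, b⟩
    · simpa using h
    · simp at h
  · obtain ⟨b, rfl, hab⟩ := withCopies_adj_inr.1 h
    simpa using hab

theorem Contains.withCopies_of_card (hK : SmallTreeBound 𝓕 r K) [Finite τ] [Finite ι] [Nonempty ι]
    (hT : T.IsAcyclic) (hτ : Nat.card τ ≤ r) (hι : K ≤ Nat.card ι)
    {F : (n : ℕ) × SimpleGraph (Fin n)} (hF : F ∈ 𝓕) (hc : Contains (withCopies G T κ) F.2) :
    Contains (withCopies G T ι) F.2 := by
  refine hc.relocate hK hT hτ (φ := Sum.inr) (ψ := Sum.inr)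
    (g := Sum.map id (Prod.map (fun _ => Classical.arbitrary ι) id)) Sum.inr_injective
    (fun i a w => withCopies_adj_inr.1) Sum.inr_injective (fun k a b h => by simpa using h)
    ?_ ?_ (fun x y _ _ h => withCopies_adj_map _ h) hι hF
  · rintro (x | x) hx (y | y) hy h
    · simpa using h
    · exact absurd ⟨_, rfl⟩ hy
    · exact absurd ⟨_, rfl⟩ hx
    · exact absurd ⟨_, rfl⟩ hx
  · rintro (x | x) hx
    · simp
    · exact absurd ⟨_, rfl⟩ hx

theorem exists_two_indices [Nontrivial κ] (u v : α ⊕ κ × τ) :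
    ∃ k₀ k₁ : κ, k₀ ≠ k₁ ∧ (∀ k a, u = Sum.inr (k, a) → k = k₀ ∨ k = k₁) ∧
      ∀ k a, v = Sum.inr (k, a) → k = k₀ ∨ k = k₁ := by
  have key : ∀ k k' : κ, ∃ k₀ k₁ : κ, k₀ ≠ k₁ ∧ (k = k₀ ∨ k = k₁) ∧ (k' = k₀ ∨ k' = k₁) := by
    intro k k'
    by_cases h : k = k'
    · obtain ⟨l, hl⟩ := exists_ne k
      exact ⟨k, l, hl.symm, Or.inl rfl, Or.inl h.symm⟩
    · exact ⟨k, k', h, Or.inl rfl, Or.inr rfl⟩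
  obtain ⟨d⟩ : Nonempty κ := inferInstance
  let idx : α ⊕ κ × τ → κ := Sum.elim (fun _ => d) Prod.fst
  obtain ⟨k₀, k₁, hne, hu, hv⟩ := key (idx u) (idx v)
  exact ⟨k₀, k₁, hne, fun k a h => by simpa [idx, h] using hu,
    fun k a h => by simpa [idx, h] using hv⟩

theorem card_sub_two_le [Finite κ] (k₀ k₁ : κ) :
    Nat.card κ ≤ Nat.card {k // k ≠ k₀ ∧ k ≠ k₁} + 2 := by
  classical
  have := Fintype.ofFinite κ
  rw [Nat.card_eq_fintype_card, Nat.card_eq_fintype_card, Fintype.card_subtype]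
  have h := Finset.card_le_card (s := Finset.univ)
    (t := (Finset.univ.filter fun k => k ≠ k₀ ∧ k ≠ k₁) ∪ {k₀, k₁}) (fun k _ => by
      by_cases h0 : k = k₀ <;> by_cases h1 : k = k₁ <;> simp [h0, h1])
  exact (h.trans (Finset.card_union_le _ _)).trans (by gcongr; exact Finset.card_le_two)

/-- Whether the union of `G` with many copies of a small tree is saturated does not depend on the
number of copies. -/
theorem FamSaturated.withCopies_of_card (hK : SmallTreeBound 𝓕 r K) [Finite τ] [Finite ι]
    [Finite κ] (hT : T.IsAcyclic) (hτ : Nat.card τ ≤ r) (hι : K + 2 ≤ Nat.card ι)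
    (hκ : K + 2 ≤ Nat.card κ) (h : FamSaturated 𝓕 (withCopies G T ι)) :
    FamSaturated 𝓕 (withCopies G T κ) := by
  classical
  have hιnt : Nontrivial ι := Finite.one_lt_card_iff_nontrivial.1 (by omega)
  have hκnt : Nontrivial κ := Finite.one_lt_card_iff_nontrivial.1 (by omega)
  refine ⟨fun F hF hc => h.1 F hF (hc.withCopies_of_card hK hT hτ (by omega) hF), ?_⟩
  intro u v huv hadj
  obtain ⟨k₀, k₁, hk, hu, hv⟩ := exists_two_indices u v
  obtain ⟨i₀, i₁, hi⟩ := exists_pair_ne ι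
  let σ : κ → ι := fun k => if k = k₀ then i₀ else i₁
  let σ' : ι → κ := fun i => if i = i₀ then k₀ else k₁
  have hσ0 : σ' (σ k₀) = k₀ := by simp [σ, σ']
  have hσ1 : σ' (σ k₁) = k₁ := by simp [σ, σ', hk.symm, hi.symm]
  let m : α ⊕ κ × τ → α ⊕ ι × τ := Sum.map id (Prod.map σ id)
  let g : α ⊕ ι × τ → α ⊕ κ × τ := Sum.map id (Prod.map σ' id)
  have hgm : ∀ x : α ⊕ κ × τ, (∀ k a, x = Sum.inr (k, a) → k = k₀ ∨ k = k₁) → g (m x) = x := by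
    rintro (x | ⟨k, a⟩) hx
    · rfl
    · rcases hx k a rfl with rfl | rfl
      · simp [g, m, hσ0]
      · simp [g, m, hσ1]
  have hgu := hgm u hu
  have hgv := hgm v hv
  obtain ⟨F, hF, hc⟩ := h.2 (m u) (m v) (fun he => huv (by rw [← hgu, ← hgv, he])) (fun ha =>
    hadj (by have := withCopies_adj_map σ' ha; rwa [← hgu, ← hgv]))
  have hrange : ∀ {x : α ⊕ ι × τ}, x ∉ Set.range
      (fun p : {i // i ≠ i₀ ∧ i ≠ i₁} × τ => (Sum.inr (p.1.1, p.2) : α ⊕ ι × τ)) →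
      ∀ i a, x = Sum.inr (i, a) → i = i₀ ∨ i = i₁ := by
    intro x hx i a hia
    by_contra! hcon
    exact hx ⟨(⟨i, hcon⟩, a), hia.symm⟩
  have hmem : ∀ i a, (Sum.inr (i, a) : α ⊕ ι × τ) = m u ∨ (Sum.inr (i, a) : α ⊕ ι × τ) = m v →
      i = i₀ ∨ i = i₁ := by
    have aux : ∀ (x : α ⊕ κ × τ) i a, (Sum.inr (i, a) : α ⊕ ι × τ) = m x → i = i₀ ∨ i = i₁ := by
      rintro (x | ⟨k, b⟩) i a h
      · simp [m] at h
      · simp only [m, Sum.map_inr, Prod.map_apply, Sum.inr.injEq, Prod.mk.injEq] at h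
        rw [h.1]
        simp only [σ]
        split_ifs <;> simp
    exact fun i a h => h.elim (aux u i a) (aux v i a)
  refine ⟨F, hF, hc.relocate hK hT hτ
    (φ := fun p : {i // i ≠ i₀ ∧ i ≠ i₁} × τ => Sum.inr (p.1.1, p.2))
    (ψ := fun p : {k // k ≠ k₀ ∧ k ≠ k₁} × τ => Sum.inr (p.1.1, p.2))
    (g := g) ?_ ?_ ?_ ?_ ?_ ?_ ?_ ?_ hF⟩
  · rintro ⟨i, a⟩ ⟨j, b⟩ h
    simpa [Subtype.ext_iff] using h
  · rintro ⟨i, hi0, hi1⟩ a w h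
    rw [sup_adj, withCopies_adj_inr] at h
    rcases h with h | h
    · exact h
    · simp only [fromEdgeSet_adj, Set.mem_singleton_iff, Sym2.eq_iff] at h
      have := hmem i a (by tauto)
      tauto
  · rintro ⟨i, a⟩ ⟨j, b⟩ h
    simpa [Subtype.ext_iff] using h
  · intro k a b hab
    exact Or.inl (by simpa using hab)
  · rintro (x | ⟨i, a⟩) hx (y | ⟨j, b⟩) hy h
    · simpa [g] using h
    · simp [g] at h
    · simp [g] at h
    · simp only [g, Sum.map_inr, Prod.map_apply, Sum.inr.injEq, Prod.mk.injEq, id] at h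
      obtain ⟨h, rfl⟩ := h
      rcases hrange hx i a rfl with rfl | rfl <;> rcases hrange hy j a rfl with rfl | rfl
      · rfl
      · simp [σ', hi.symm, hk] at h
      · simp [σ', hi.symm, hk.symm] at h
      · rfl
  · rintro (x | ⟨i, a⟩) hx ⟨⟨⟨k, hk0, hk1⟩, b⟩, h⟩
    · simp [g] at h
    · simp only [g, Sum.map_inr, Prod.map_apply, Sum.inr.injEq, Prod.mk.injEq, σ'] at h
      rw [h.1] at hk0 hk1
      split_ifs at hk0 hk1 <;> tauto
  · intro x y hx hy hxy
    rw [sup_adj] at hxy ⊢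
    rcases hxy with hxy | hxy
    · exact Or.inl (withCopies_adj_map σ' hxy)
    · right
      simp only [fromEdgeSet_adj, Set.mem_singleton_iff, Sym2.eq_iff, ne_eq] at hxy ⊢
      rcases hxy with ⟨⟨rfl, rfl⟩ | ⟨rfl, rfl⟩, -⟩
      · exact ⟨Or.inl ⟨hgu, hgv⟩, by rwa [hgu, hgv]⟩
      · exact ⟨Or.inr ⟨hgv, hgu⟩, by rw [hgu, hgv]; exact fun h => huv h.symm⟩
  · have := card_sub_two_le k₀ k₁
    omega

end Copies

section EdgeCount

variable {V : Type*}

theorem sum_card_supp [Finite V] (G : SimpleGraph V) [Fintype G.ConnectedComponent] :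
    ∑ c : G.ConnectedComponent, Nat.card c.supp = Nat.card V := by
  rw [← Nat.card_sigma]
  exact Nat.card_congr (Equiv.sigmaFiberEquiv G.connectedComponentMk)

theorem sum_card_edgeSet_induce_supp_le [Finite V] (G : SimpleGraph V)
    [Fintype G.ConnectedComponent] :
    ∑ c : G.ConnectedComponent, Nat.card (G.induce c.supp).edgeSet ≤ Nat.card G.edgeSet := by
  rw [← Nat.card_sigma]
  refine Nat.card_le_card_of_injective
    (fun p : Σ c : G.ConnectedComponent, (G.induce c.supp).edgeSet =>
      (Embedding.induce p.1.supp).mapEdgeSet p.2) ?_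
  rintro ⟨c, e, he⟩ ⟨d, e', he'⟩ h
  have h := congrArg Subtype.val h
  simp only [Embedding.mapEdgeSet_apply, Hom.mapEdgeSet_coe] at h
  have hcd : c = d := by
    induction e with | _ x y
    induction e' with | _ z w
    simp only [Sym2.map_mk, Sym2.eq_iff] at h
    have hx : G.connectedComponentMk x = c := x.2
    have hz : G.connectedComponentMk z = d := z.2
    have hw : G.connectedComponentMk w = d := w.2
    rcases h with ⟨h, -⟩ | ⟨h, -⟩
    · exact hx.symm.trans ((congrArg _ h).trans hz)
    · exact hx.symm.trans ((congrArg _ h).trans hw)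
  subst hcd
  obtain rfl := Sym2.map.injective (Embedding.induce (G := G) c.supp).injective h
  rfl

theorem card_le_card_edgeSet_add_treeComponents [Finite V] (G : SimpleGraph V) :
    Nat.card V ≤ Nat.card G.edgeSet +
      Nat.card {c : G.ConnectedComponent // (G.induce c.supp).IsTree} := by
  classical
  have := Fintype.ofFinite G.ConnectedComponent
  have key : ∀ c : G.ConnectedComponent, Nat.card c.supp ≤
      Nat.card (G.induce c.supp).edgeSet + if (G.induce c.supp).IsTree then 1 else 0 := by
    intro c
    have hconn : (G.induce c.supp).Connected := c.connected_toSimpleGraph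
    have hle := hconn.card_vert_le_card_edgeSet_add_one
    split_ifs with ht
    · exact hle
    · rw [isTree_iff_connected_and_card] at ht
      have : Nat.card (G.induce c.supp).edgeSet + 1 ≠ Nat.card c.supp := fun h => ht ⟨hconn, h⟩
      omega
  calc Nat.card V = ∑ c : G.ConnectedComponent, Nat.card c.supp := (sum_card_supp G).symm
    _ ≤ _ := Finset.sum_le_sum fun c _ => key c
    _ ≤ _ := by
      rw [Finset.sum_add_distrib, Nat.card_eq_fintype_card (α := {c : G.ConnectedComponent // _}),
        Fintype.card_subtype, Finset.card_filter]
      exact Nat.add_le_add_right (sum_card_edgeSet_induce_supp_le G) _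

/-- A graph with few small tree components has almost as many edges as vertices. -/
theorem mul_card_le_of_treeComponents [Finite V] (G : SimpleGraph V) (R : ℕ)
    (B : ∀ t, SimpleGraph (Fin t) → ℕ)
    (hB : ∀ t < R, ∀ T : SimpleGraph (Fin t), T.IsTree →
      Nat.card {c : G.ConnectedComponent // Nonempty (G.induce c.supp ≃g T)} ≤ B t T) :
    R * Nat.card V ≤ R * Nat.card G.edgeSet +
      R * ∑ t ∈ Finset.range R, ∑ T : SimpleGraph (Fin t), B t T + Nat.card V := by
  classical
  have := Fintype.ofFinite G.ConnectedComponent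
  have hsmall := card_treeComponents_le G R B hB
  have hall := card_le_card_edgeSet_add_treeComponents G
  rw [Nat.card_eq_fintype_card (α := {c : G.ConnectedComponent // _}), Fintype.card_subtype]
    at hsmall hall
  rw [← Finset.card_filter_add_card_filter_not (fun c => Nat.card c.supp < R),
    Finset.filter_filter, Finset.filter_filter] at hall
  have hlarge : R * (Finset.univ.filter fun c : G.ConnectedComponent =>
      (G.induce c.supp).IsTree ∧ ¬ Nat.card c.supp < R).card ≤ Nat.card V := by
    rw [← sum_card_supp G, mul_comm, ← smul_eq_mul]
    refine (Finset.card_nsmul_le_sum _ (fun c => Nat.card c.supp) _ fun c hc => ?_).trans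
      (Finset.sum_le_sum_of_subset (Finset.subset_univ _))
    simp only [Finset.mem_filter] at hc
    omega
  nlinarith [Nat.mul_le_mul_left R hall, Nat.mul_le_mul_left R hsmall]

end EdgeCount

section Extraction

variable {𝓕 : GraphFam} {V ι τ : Type*}

theorem card_edgeSet_bot_boxProd [Finite ι] [Finite τ] (T : SimpleGraph τ) :
    Nat.card ((⊥ : SimpleGraph ι) □ T).edgeSet = Nat.card ι * Nat.card T.edgeSet := by
  rw [← Nat.card_prod]
  refine (Nat.card_congr (Equiv.ofBijective (fun p : ι × T.edgeSet =>
    (⟨Sym2.map (Prod.mk p.1) p.2.1, ?_⟩ : ((⊥ : SimpleGraph ι) □ T).edgeSet)) ⟨?_, ?_⟩)).symm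
  · obtain ⟨i, e, he⟩ := p
    induction e with | _ x y
    simpa using he
  · rintro ⟨i, e, he⟩ ⟨j, e', he'⟩ h
    have h := congrArg Subtype.val h
    have hij : i = j := by
      induction e with | _ x y
      induction e' with | _ z w
      simp only [Sym2.map_mk, Sym2.eq_iff, Prod.mk.injEq] at h
      tauto
    subst hij
    obtain rfl := Sym2.map.injective (Prod.mk_right_injective i) h
    rfl
  · rintro ⟨e, he⟩
    induction e with | _ x y
    obtain ⟨i, a⟩ := x
    obtain ⟨j, b⟩ := y
    simp only [mem_edgeSet, boxProd_adj, bot_adj, false_and, false_or] at he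
    obtain ⟨hab, rfl⟩ := he
    exact ⟨(i, ⟨s(a, b), hab⟩), rfl⟩

theorem card_edgeSet_withCopies [Finite V] [Finite ι] [Finite τ] (G : SimpleGraph V)
    (T : SimpleGraph τ) :
    Nat.card (withCopies G T ι).edgeSet =
      Nat.card G.edgeSet + Nat.card ι * Nat.card T.edgeSet := by
  rw [Nat.card_congr edgeSetSumEquiv, Nat.card_sum, card_edgeSet_bot_boxProd]

/-- The copies of `T` embedded by `φ` are components of `G`. -/
def IsCopies (G : SimpleGraph V) (T : SimpleGraph τ) (φ : ι × τ → V) : Prop :=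
  Function.Injective φ ∧ ∀ i a w, G.Adj (φ (i, a)) w ↔ ∃ b, w = φ (i, b) ∧ T.Adj a b

theorem IsCopies.nonempty_iso {G : SimpleGraph V} {T : SimpleGraph τ} {φ : ι × τ → V}
    (h : IsCopies G T φ) :
    Nonempty (withCopies (G.induce (Set.range φ)ᶜ) T ι ≃g G) := by
  let e : (↥(Set.range φ)ᶜ) ⊕ ι × τ ≃ V := Equiv.ofBijective (Sum.elim Subtype.val φ) <| by
    constructor
    · rintro (⟨x, hx⟩ | p) (⟨y, hy⟩ | q) hxy
      · simpa using hxy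
      · exact absurd ⟨q, hxy.symm⟩ hx
      · exact absurd ⟨p, hxy⟩ hy
      · exact congrArg Sum.inr (h.1 hxy)
    · intro v
      by_cases hv : v ∈ Set.range φ
      · obtain ⟨p, rfl⟩ := hv
        exact ⟨Sum.inr p, rfl⟩
      · exact ⟨Sum.inl ⟨v, hv⟩, rfl⟩
  have hcopy : ∀ i a w, G.Adj (φ (i, a)) (e w) ↔
      (withCopies (G.induce (Set.range φ)ᶜ) T ι).Adj (Sum.inr (i, a)) w := by
    intro i a w
    rw [h.2, withCopies_adj_inr]
    refine exists_congr fun b => and_congr_left fun _ => ?_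
    exact ⟨fun hw => e.injective hw, fun hw => congrArg e hw⟩
  refine ⟨⟨e, ?_⟩⟩
  rintro (x | ⟨i, a⟩) w
  · rcases w with y | ⟨j, b⟩
    · exact Iff.rfl
    · rw [adj_comm, (withCopies (G.induce (Set.range φ)ᶜ) T ι).adj_comm]
      exact hcopy j b (Sum.inl x)
  · exact hcopy i a w

theorem exists_isCopies_of_components {G : SimpleGraph V} {T : SimpleGraph τ}
    (c : ι → G.ConnectedComponent) (hc : Function.Injective c)
    (hT : ∀ i, Nonempty (G.induce (c i).supp ≃g T)) : ∃ φ : ι × τ → V, IsCopies G T φ := by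
  have e := fun i => (hT i).some
  refine ⟨fun p => ((e p.1).symm p.2 : V), ?_, ?_⟩
  · rintro ⟨i, a⟩ ⟨j, b⟩ h
    have hi : G.connectedComponentMk ((e i).symm a) = c i := ((e i).symm a).2
    have hj : G.connectedComponentMk ((e j).symm b) = c j := ((e j).symm b).2
    obtain rfl : i = j := hc (hi.symm.trans ((congrArg _ h).trans hj))
    exact congrArg (Prod.mk i) ((e i).symm.injective (Subtype.ext h))
  · intro i a w
    constructor
    · intro h
      have hw : w ∈ (c i).supp := by
        have hi : G.connectedComponentMk ((e i).symm a) = c i := ((e i).symm a).2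
        rw [ConnectedComponent.mem_supp_iff, ← hi]
        exact (ConnectedComponent.sound h.reachable).symm
      refine ⟨e i ⟨w, hw⟩, by simp, ?_⟩
      have := (e i).map_adj_iff (v := (e i).symm a) (w := ⟨w, hw⟩)
      rw [RelIso.apply_symm_apply] at this
      exact this.2 h
    · rintro ⟨b, rfl, hab⟩
      exact (e i).symm.map_adj_iff.2 hab

/-- Some `𝓕`-saturated graph has at least `N` components isomorphic to `T` and its other vertices
number `c` modulo `r`. -/
def Rich (𝓕 : GraphFam) (N : ℕ) {r : ℕ} (T : SimpleGraph (Fin r)) (c : ℕ) : Prop :=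
  ∃ (m : ℕ) (G : SimpleGraph (Fin m)), FamSaturated 𝓕 (withCopies G T (Fin N)) ∧ m % r = c

theorem IsCopies.exists_withCopies [Finite V] [Finite ι] [Finite τ] {G : SimpleGraph V}
    {T : SimpleGraph τ} {φ : ι × τ → V} (h : IsCopies G T φ) :
    ∃ (m : ℕ) (G₀ : SimpleGraph (Fin m)), Nonempty (withCopies G₀ T ι ≃g G) ∧
      m + Nat.card ι * Nat.card τ = Nat.card V := by
  obtain ⟨e⟩ := h.nonempty_iso
  let i := Iso.map (Finite.equivFin ↥(Set.range φ)ᶜ) (G.induce (Set.range φ)ᶜ)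
  refine ⟨_, _, ⟨(Iso.sumCongr i.symm Iso.refl).trans e⟩, ?_⟩
  rw [← Nat.card_congr e.toEquiv, Nat.card_sum, Nat.card_prod]

theorem IsCopies.rich [Finite V] {N r : ℕ} {G : SimpleGraph V} {T : SimpleGraph (Fin r)}
    {φ : Fin N × Fin r → V} (h : IsCopies G T φ) (hG : FamSaturated 𝓕 G) :
    Rich 𝓕 N T (Nat.card V % r) := by
  obtain ⟨m, G₀, ⟨e⟩, hm⟩ := h.exists_withCopies
  refine ⟨m, G₀, hG.of_iso e.symm, ?_⟩
  rw [← hm]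
  simp

theorem sat_le [Finite V] {G : SimpleGraph V} (hG : FamSaturated 𝓕 G) :
    sat (Nat.card V) 𝓕 ≤ Nat.card G.edgeSet := by
  let i := Iso.map (Finite.equivFin V) G
  exact Nat.sInf_le ⟨_, hG.of_iso i, (Nat.card_congr i.mapEdgeSet).symm⟩

theorem exists_card_edgeSet_eq_sat (h : ∀ F ∈ 𝓕, 1 ≤ Nat.card F.2.edgeSet) (n : ℕ) :
    ∃ G : SimpleGraph (Fin n), FamSaturated 𝓕 G ∧ Nat.card G.edgeSet = sat n 𝓕 := by
  have hfree : FamFree 𝓕 (⊥ : SimpleGraph (Fin n)) := by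
    rintro F hF ⟨f, hf⟩
    have hpos := h F hF
    obtain ⟨⟨⟨x, y⟩, he⟩⟩ := (Nat.card_pos_iff.1 hpos).1
    exact hf x y he
  obtain ⟨G, -, hG⟩ := hfree.exists_le_famSaturated
  exact Nat.sInf_mem (s := {m | ∃ G : SimpleGraph (Fin n), FamSaturated 𝓕 G ∧
    Nat.card G.edgeSet = m}) ⟨_, G, hG, rfl⟩

end Extraction

section Asymptotics

variable {𝓕 : GraphFam} {K : ℕ → ℕ}

/-- The residue classes modulo `r` containing the orders of saturated graphs with many components
isomorphic to one tree on `r` vertices. -/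
def richClasses (𝓕 : GraphFam) (K : ℕ → ℕ) (r : ℕ) : Set (Set ℕ) :=
  {C | ∃ c < r, C = {n : ℕ | n % r = c} ∧
    ∃ T : SimpleGraph (Fin r), T.IsTree ∧ Rich 𝓕 (K r + 2) T c}

/-- `n` lies in no class of `richClasses 𝓕 K q` for `1 ≤ q < R`. -/
def AvoidsClasses (𝓕 : GraphFam) (K : ℕ → ℕ) (R n : ℕ) : Prop :=
  ∀ q : ℕ, 1 ≤ q → q < R → ∀ D ∈ richClasses 𝓕 K q, n ∉ D

/-- An upper bound on the number of small tree components in a graph of order avoiding the rich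
classes. -/
def treeConst (K : ℕ → ℕ) (R : ℕ) : ℕ :=
  ∑ t ∈ Finset.range R, ∑ _T : SimpleGraph (Fin t), (K t + 1)

theorem exists_isCopies_of_le_card {V τ : Type*} [Finite V] {G : SimpleGraph V}
    {T : SimpleGraph τ} {N : ℕ}
    (h : N ≤ Nat.card {c : G.ConnectedComponent // Nonempty (G.induce c.supp ≃g T)}) :
    ∃ φ : Fin N × τ → V, IsCopies G T φ := by
  have := Fintype.ofFinite {c : G.ConnectedComponent // Nonempty (G.induce c.supp ≃g T)}
  rw [Nat.card_eq_fintype_card, ← Fintype.card_fin N] at h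
  obtain ⟨e⟩ := Function.Embedding.nonempty_of_card_le h
  exact exists_isCopies_of_components (fun i => (e i).1)
    (Subtype.val_injective.comp e.injective) fun i => (e i).2

theorem one_le_of_isTree {r : ℕ} {T : SimpleGraph (Fin r)} (hT : T.IsTree) : 1 ≤ r := by
  obtain ⟨x⟩ := hT.connected.nonempty
  exact x.pos

theorem AvoidsClasses.card_components_le {R n : ℕ} (h : AvoidsClasses 𝓕 K R n)
    {G : SimpleGraph (Fin n)} (hG : FamSaturated 𝓕 G) {t : ℕ} (ht : t < R)
    {T : SimpleGraph (Fin t)} (hT : T.IsTree) :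
    Nat.card {c : G.ConnectedComponent // Nonempty (G.induce c.supp ≃g T)} ≤ K t + 1 := by
  by_contra! hcon
  obtain ⟨φ, hφ⟩ := exists_isCopies_of_le_card (N := K t + 2) hcon
  have ht1 := one_le_of_isTree hT
  have hrich := hφ.rich hG
  rw [Nat.card_fin] at hrich
  exact h t ht1 ht _ ⟨n % t, Nat.mod_lt _ ht1, rfl, T, hT, hrich⟩ rfl

theorem AvoidsClasses.mul_le (h2 : ∀ F ∈ 𝓕, 1 ≤ Nat.card F.2.edgeSet) {R n : ℕ}
    (h : AvoidsClasses 𝓕 K R n) :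
    R * n ≤ R * sat n 𝓕 + R * treeConst K R + n := by
  obtain ⟨G, hG, hcard⟩ := exists_card_edgeSet_eq_sat h2 n
  have := mul_card_le_of_treeComponents G R (fun t _ => K t + 1)
    fun t ht T hT => h.card_components_le hG ht hT
  rwa [Nat.card_fin, hcard] at this

theorem mul_sat_sub_le (hK : ∀ r, SmallTreeBound 𝓕 r (K r)) {r m : ℕ} {T : SimpleGraph (Fin r)}
    (hT : T.IsTree) {G : SimpleGraph (Fin m)}
    (h : FamSaturated 𝓕 (withCopies G T (Fin (K r + 2)))) {n : ℕ} (hn : n % r = m % r)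
    (hle : m + (K r + 2) * r ≤ n) :
    (r : ℤ) * sat n 𝓕 - (r - 1) * n ≤ r * Nat.card G.edgeSet - (r - 1) * m := by
  obtain ⟨N, rfl⟩ : ∃ N, n = m + N * r := by
    obtain ⟨N, hN⟩ := (Nat.modEq_iff_dvd' (by lia : m ≤ n)).1 hn.symm
    exact ⟨N, by rw [mul_comm N r, ← hN]; lia⟩
  have hr := one_le_of_isTree hT
  have hN : K r + 2 ≤ N := by
    refine Nat.le_of_mul_le_mul_right ?_ hr
    lia
  have hsat := sat_le (h.withCopies_of_card (κ := Fin N) (hK r) hT.isAcyclic (by simp) (by simp)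
    (by simpa using hN))
  have hTe : Nat.card T.edgeSet + 1 = r := by
    simpa using (isTree_iff_connected_and_card.1 hT).2
  rw [card_edgeSet_withCopies, Nat.card_sum, Nat.card_prod, Nat.card_fin, Nat.card_fin,
    Nat.card_fin] at hsat
  zify at hsat hTe
  have hTe' : (Nat.card T.edgeSet : ℤ) = r - 1 := by lia
  rw [hTe'] at hsat
  push_cast
  nlinarith [mul_le_mul_of_nonneg_left hsat (Int.natCast_nonneg r)]

theorem exists_eventually_eq_of_antitone {P : ℕ → Prop} {f : ℕ → ℤ} {b : ℤ}
    (hb : ∀ n, P n → b ≤ f n) (hf : ∀ n n', P n → P n' → n ≤ n' → f n' ≤ f n) :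
    ∃ k, ∀ᶠ n in atTop, P n → f n = k := by
  by_cases hP : ∃ n, P n
  · obtain ⟨n₀, hn₀, hmin⟩ := WellFounded.has_min (measure fun n => (f n - b).toNat).wf
      {n | P n} hP
    refine ⟨f n₀, (eventually_ge_atTop n₀).mono fun n hle hn => ?_⟩
    have h1 := hf n₀ n hn₀ hn hle
    have h2 := hmin n hn
    have h3 := hb n hn
    have h4 := hb n₀ hn₀
    simp only [InvImage, WellFoundedRelation.rel] at h2
    lia
  · exact ⟨0, Eventually.of_forall fun n hn => absurd ⟨n, hn⟩ hP⟩

theorem exists_eventually_sat_eq (h2 : ∀ F ∈ 𝓕, 1 ≤ Nat.card F.2.edgeSet)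
    (hK : ∀ r, SmallTreeBound 𝓕 r (K r)) {r : ℕ} {C : Set ℕ}
    (hC : C ∈ richClasses 𝓕 K r) :
    ∃ k : ℤ, ∀ᶠ n : ℕ in atTop, n ∈ C ∧ AvoidsClasses 𝓕 K r n →
      (sat n 𝓕 : ℤ) * r = ((r : ℤ) - 1) * n + k := by
  obtain ⟨c, hc, rfl, T, hT, m, G, hG, hm⟩ := hC
  set k₀ : ℤ := r * Nat.card G.edgeSet - (r - 1) * m with hk₀
  set A := treeConst K (r + 1)
  obtain ⟨M, hM⟩ : ∃ M : ℕ, ((r : ℤ) + 1) * k₀ + r * (r + 1) * A < M :=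
    ⟨(((r : ℤ) + 1) * k₀ + r * (r + 1) * A).toNat + 1, by lia⟩
  have hcopies : ∀ n, n % r = c → m + (K r + 2) * r ≤ n → M ≤ n → AvoidsClasses 𝓕 K r n →
      ∀ n', n' % r = c → n ≤ n' →
      (r : ℤ) * sat n' 𝓕 - (r - 1) * n' ≤ r * sat n 𝓕 - (r - 1) * n := by
    intro n hnc hnm hnM hn n' hn'c hnn'
    obtain ⟨G', hG', hcard⟩ := exists_card_edgeSet_eq_sat h2 n
    have hex : ∃ T' : SimpleGraph (Fin r), T'.IsTree ∧ K r + 2 ≤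
        Nat.card {c : G'.ConnectedComponent // Nonempty (G'.induce c.supp ≃g T')} := by
      by_contra! hcon
      have hle := mul_card_le_of_treeComponents G' (r + 1) (fun t _ => K t + 1)
        fun t ht T' hT' => by
          rcases Nat.lt_succ_iff_lt_or_eq.1 ht with ht | rfl
          · exact hn.card_components_le hG' ht hT'
          · exact Nat.lt_succ_iff.1 (hcon T' hT')
      rw [Nat.card_fin, hcard] at hle
      change _ ≤ _ + (r + 1) * A + n at hle
      have hup := mul_sat_sub_le hK hT hG (hnc.trans hm.symm) hnm
      rw [← hk₀] at hup
      zify at hle hnM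
      have e1 := mul_le_mul_of_nonneg_left hle (Int.natCast_nonneg r)
      have e2 := mul_le_mul_of_nonneg_left hup (by positivity : (0 : ℤ) ≤ r + 1)
      nlinarith
    obtain ⟨T', hT', hcomp⟩ := hex
    obtain ⟨φ, hφ⟩ := exists_isCopies_of_le_card hcomp
    obtain ⟨m', G₀, ⟨e⟩, hm'⟩ := hφ.exists_withCopies
    rw [Nat.card_fin, Nat.card_fin, Nat.card_fin] at hm'
    have hmod : m' % r = c := by
      rw [← hnc, ← hm']
      simp
    have hup := mul_sat_sub_le hK hT' (hG'.of_iso e.symm) (hn'c.trans hmod.symm)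
      (hm'.le.trans hnn')
    refine hup.trans (le_of_eq ?_)
    have hTe : Nat.card T'.edgeSet + 1 = r := by
      simpa using (isTree_iff_connected_and_card.1 hT').2
    rw [← hcard, ← Nat.card_congr e.mapEdgeSet, card_edgeSet_withCopies, Nat.card_fin, ← hm']
    have hTe' : (Nat.card T'.edgeSet : ℤ) = r - 1 := by lia
    push_cast
    rw [hTe']
    ring
  obtain ⟨k, hk⟩ := exists_eventually_eq_of_antitone
    (P := fun n => n % r = c ∧ m + (K r + 2) * r ≤ n ∧ M ≤ n ∧ AvoidsClasses 𝓕 K r n)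
    (f := fun n => (r : ℤ) * sat n 𝓕 - (r - 1) * n) (b := -(r * treeConst K r))
    (fun n hn => by
      have := hn.2.2.2.mul_le h2
      zify at this
      linarith)
    (fun n n' hn hn' hle => hcopies n hn.1 hn.2.1 hn.2.2.1 hn.2.2.2 n' hn'.1 hle)
  refine ⟨k, ?_⟩
  filter_upwards [hk, eventually_ge_atTop (m + (K r + 2) * r), eventually_ge_atTop M] with n hn
    h₁ h₂ h
  linarith [hn ⟨h.1, h₁, h₂, h.2⟩]

theorem exists_sublinear_deficit (h2 : ∀ F ∈ 𝓕, 1 ≤ Nat.card F.2.edgeSet) :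
    ∃ g : ℕ → ℝ, Tendsto (fun n : ℕ => g n / n) atTop (𝓝 0) ∧
      ∀ n : ℕ, (∀ R, AvoidsClasses 𝓕 K R n) → (n : ℝ) - g n ≤ (sat n 𝓕 : ℝ) := by
  classical
  refine ⟨fun n => if ∀ R, AvoidsClasses 𝓕 K R n then max ((n : ℝ) - sat n 𝓕) 0 else 0, ?_,
    fun n hn => ?_⟩
  · rw [Metric.tendsto_atTop]
    intro ε hε
    obtain ⟨R, hR⟩ := exists_nat_gt (2 / ε)
    obtain ⟨M, hM⟩ := exists_nat_gt (2 * treeConst K R / ε)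
    refine ⟨M + 1, fun n hn => ?_⟩
    have hn0 : (0 : ℝ) < n := by exact_mod_cast (by lia : 0 < n)
    have hMn : (M : ℝ) < n := by exact_mod_cast (by lia : M < n)
    dsimp only
    rw [Real.dist_0_eq_abs, abs_of_nonneg (by split_ifs <;> positivity), div_lt_iff₀ hn0]
    split_ifs with h
    · refine max_lt ?_ (by positivity)
      have hle := (h R).mul_le h2
      have hle : (R : ℝ) * n ≤ R * sat n 𝓕 + R * treeConst K R + n := by exact_mod_cast hle
      have hRpos : (0 : ℝ) < R := lt_trans (by positivity) hR
      rw [div_lt_iff₀ hε] at hR hM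
      refine lt_of_mul_lt_mul_left ?_ hRpos.le
      nlinarith [mul_lt_mul_of_pos_right hR hn0, mul_lt_mul_of_pos_left hM hRpos,
        mul_lt_mul_of_pos_left hMn (mul_pos hRpos hε)]
    · positivity
  · dsimp only
    rw [if_pos hn]
    linarith [le_max_left ((n : ℝ) - sat n 𝓕) 0]

end Asymptotics

section Shift

variable {σ τ ι : Type*}

/-- Adjacency in the graph obtained from `U` by attaching copies of `T` indexed by `ι`, each by an
edge between `u` and the vertex `x` of the copy. -/
def BranchAdj (U : SimpleGraph σ) (T : SimpleGraph τ) (u : σ) (x : τ) :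
    σ ⊕ ι × τ → σ ⊕ ι × τ → Prop
  | .inl a, .inl b => U.Adj a b
  | .inl a, .inr (_, b) => a = u ∧ b = x
  | .inr (_, b), .inl a => a = u ∧ b = x
  | .inr (i, a), .inr (j, b) => i = j ∧ T.Adj a b

/-- Attaching enough copies of `T` to any vertex `u` of `U` yields a copy of `T` through `u`. -/
def AbsorbsCopies (T : SimpleGraph τ) (U : SimpleGraph σ) : Prop :=
  ∀ u x, ∃ h : τ → σ ⊕ τ × τ, Function.Injective h ∧ (∃ y, h y = Sum.inl u) ∧
    ∀ a b, T.Adj a b → BranchAdj U T u x (h a) (h b)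

variable {𝓕 : GraphFam} {r K : ℕ} {α : Type*}

theorem FamFree.withCopies_sum (hK : SmallTreeBound 𝓕 r K) [Finite τ] [Finite ι] [Nonempty ι]
    {G : SimpleGraph α} {T : SimpleGraph τ} {U : SimpleGraph σ}
    (hT : T.IsAcyclic) (hτ : Nat.card τ ≤ r) (hι : K ≤ Nat.card ι) (hU : Contains T U)
    (h : FamFree 𝓕 (withCopies G T ι)) : FamFree 𝓕 (withCopies G T ι ⊕g U) := by
  intro F hF hc
  obtain ⟨f, hf⟩ := hU
  have hc' : Contains (withCopies G T (Option ι)) F.2 := by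
    refine hc.trans_injective (Sum.elim (Sum.map id (Prod.map some id))
      fun u => Sum.inr (none, f u)) ?_ ?_
    · rintro ((x | ⟨i, a⟩) | u) ((y | ⟨j, b⟩) | v) hxy <;> simp_all
    · rintro (x | u) (y | v) hxy
      · exact withCopies_adj_map some hxy
      · simp at hxy
      · simp at hxy
      · simpa using hf _ _ hxy
  exact h F hF (hc'.withCopies_of_card hK hT hτ hι hF)

theorem FamSaturated.adj_of_embedding {β : Type*} {G : SimpleGraph α} {G' : SimpleGraph β}
    (hG : FamSaturated 𝓕 G) (hG' : FamFree 𝓕 G') {f : α → β} (hf : Function.Injective f)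
    (hadj : ∀ a b, G.Adj a b → G'.Adj (f a) (f b)) {v w : α} (h : G'.Adj (f v) (f w)) :
    G.Adj v w := by
  by_contra hcon
  obtain ⟨F, hF, hc⟩ := hG.2 v w (fun he => h.ne (congrArg f he)) hcon
  refine hG' F hF (hc.trans_injective f hf fun a b hab => ?_)
  simp only [sup_adj, fromEdgeSet_adj, Set.mem_singleton_iff, Sym2.eq_iff, ne_eq] at hab
  rcases hab with hab | ⟨⟨rfl, rfl⟩ | ⟨rfl, rfl⟩, -⟩
  · exact hadj _ _ hab
  · exact h
  · exact h.symm

/-- In a graph free of `𝓕` extending the disjoint union of a saturated graph and `U`, few copies of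
`T` are attached to the same vertex of `U` in the same way. -/
theorem card_attached_le (hK : SmallTreeBound 𝓕 r K) [Finite τ] [Finite ι]
    {G : SimpleGraph α} {T : SimpleGraph τ} {U : SimpleGraph σ} (hT : T.IsAcyclic)
    (hτ : Nat.card τ ≤ r) (hι : K + (Nat.card τ + 1) ≤ Nat.card ι) (hU : AbsorbsCopies T U)
    (hG : FamSaturated 𝓕 (withCopies G T ι)) {G' : SimpleGraph ((α ⊕ ι × τ) ⊕ σ)}
    (hle : withCopies G T ι ⊕g U ≤ G') (hG' : FamFree 𝓕 G') (u : σ) (x : τ) :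
    Nat.card {i // G'.Adj (Sum.inr u) (Sum.inl (Sum.inr (i, x)))} ≤ Nat.card τ := by
  classical
  by_contra! hcon
  have := Fintype.ofFinite τ
  have := Fintype.ofFinite ι
  have hcard : Fintype.card (Option τ) ≤
      Fintype.card {i // G'.Adj (Sum.inr u) (Sum.inl (Sum.inr (i, x)))} := by
    rw [Fintype.card_option]
    simpa [Nat.card_eq_fintype_card] using hcon
  obtain ⟨j⟩ := Function.Embedding.nonempty_of_card_le hcard
  have hj : ∀ {p q}, (j p).1 = (j q).1 → p = q := fun h => j.injective (Subtype.ext h)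
  obtain ⟨h, hinj, ⟨y, hy⟩, hadj⟩ := hU u x
  let i₀ : ι := j (some x)
  let i₁ : ι := j none
  have hi : i₀ ≠ i₁ := fun h => by simpa using hj h
  let emb : σ ⊕ τ × τ → (α ⊕ ι × τ) ⊕ σ :=
    Sum.elim Sum.inr fun p => Sum.inl (Sum.inr ((j (some p.1)).1, p.2))
  have hemb : Function.Injective emb := by
    rintro (a | ⟨k, a⟩) (b | ⟨l, b⟩) hab
    · simpa [emb] using hab
    · simp [emb] at hab
    · simp [emb] at hab
    · simp only [emb, Sum.elim_inr, Sum.inl.injEq, Sum.inr.injEq, Prod.mk.injEq] at hab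
      obtain ⟨h1, rfl⟩ := hab
      rw [Option.some_injective _ (hj h1)]
  have hembadj : ∀ p q, BranchAdj U T u x p q → G'.Adj (emb p) (emb q) := by
    rintro (a | ⟨k, a⟩) (b | ⟨l, b⟩) hab
    · exact hle hab
    · obtain ⟨rfl, rfl⟩ := hab
      exact (j (some l)).2
    · obtain ⟨rfl, rfl⟩ := hab
      exact (j (some k)).2.symm
    · obtain ⟨rfl, hab⟩ := hab
      exact hle (by simpa [emb] using hab)
  have hembne : ∀ p a, emb p ≠ Sum.inl (Sum.inl a) := by
    rintro (b | b) a <;> simp [emb]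
  have hembne' : ∀ p a, emb p ≠ Sum.inl (Sum.inr (i₁, a)) := by
    rintro (b | ⟨k, b⟩) a hab
    · simp [emb] at hab
    · simp only [emb, Sum.elim_inr, Sum.inl.injEq, Sum.inr.injEq, Prod.mk.injEq] at hab
      simpa using hj hab.1
  let g : α ⊕ ι × τ → (α ⊕ ι × τ) ⊕ σ :=
    Sum.elim (fun a => Sum.inl (Sum.inl a))
      fun p => if p.1 = i₁ then Sum.inl (Sum.inr p) else emb (h p.2)
  have hg₀ : ∀ a, g (Sum.inr (i₀, a)) = emb (h a) := fun a => by simp [g, hi]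
  have hg₁ : ∀ a, g (Sum.inr (i₁, a)) = Sum.inl (Sum.inr (i₁, a)) := fun a => by simp [g]
  obtain ⟨F, hF, hc⟩ := hG.2 (Sum.inr (i₀, y)) (Sum.inr (i₁, x)) (by simp [hi]) (by simp [hi])
  have hrange : ∀ {i a}, (Sum.inr (i, a) : α ⊕ ι × τ) ∉ Set.range
      (fun p : {i // i ≠ i₀ ∧ i ≠ i₁} × τ => (Sum.inr (p.1.1, p.2) : α ⊕ ι × τ)) →
      i = i₀ ∨ i = i₁ := by
    intro i a hx
    by_contra! hne
    exact hx ⟨(⟨i, hne⟩, a), rfl⟩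
  refine hG' F hF (hc.relocate hK hT hτ
    (φ := fun p : {i // i ≠ i₀ ∧ i ≠ i₁} × τ => Sum.inr (p.1.1, p.2))
    (ψ := fun p : {i // i ∉ Set.range fun k => (j k).1} × τ => Sum.inl (Sum.inr (p.1.1, p.2)))
    (g := g) ?_ ?_ ?_ ?_ ?_ ?_ ?_ ?_ hF)
  · rintro ⟨i, a⟩ ⟨j, b⟩ h
    simpa [Subtype.ext_iff] using h
  · rintro ⟨i, hi0, hi1⟩ a w h
    rw [sup_adj, withCopies_adj_inr] at h
    rcases h with h | h
    · exact h
    · simp only [fromEdgeSet_adj, Set.mem_singleton_iff, Sym2.eq_iff, Sum.inr.injEq,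
        Prod.mk.injEq] at h
      tauto
  · rintro ⟨i, a⟩ ⟨j, b⟩ h
    simpa [Subtype.ext_iff] using h
  · intro k a b hab
    exact hle (by simpa using hab)
  · rintro (v | ⟨k, a⟩) hv (w | ⟨l, b⟩) hw hvw
    · simpa [g] using hvw
    · rcases hrange hw with rfl | rfl
      · rw [hg₀] at hvw
        exact absurd hvw.symm (hembne _ _)
      · rw [hg₁] at hvw
        simp [g] at hvw
    · rcases hrange hv with rfl | rfl
      · rw [hg₀] at hvw
        exact absurd hvw (hembne _ _)
      · rw [hg₁] at hvw
        simp [g] at hvw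
    · rcases hrange hv with rfl | rfl <;> rcases hrange hw with rfl | rfl
      · rw [hg₀, hg₀] at hvw
        rw [hinj (hemb hvw)]
      · rw [hg₀, hg₁] at hvw
        exact absurd hvw (hembne' _ _)
      · rw [hg₀, hg₁] at hvw
        exact absurd hvw.symm (hembne' _ _)
      · rw [hg₁, hg₁] at hvw
        simpa using hvw
  · rintro (v | ⟨k, a⟩) hv ⟨⟨⟨l, hl⟩, b⟩, hlb⟩
    · simp [g] at hlb
    · rcases hrange hv with rfl | rfl
      · rw [hg₀] at hlb
        rcases hha : h a with c | ⟨p, c⟩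
        · simp [hha, emb] at hlb
        · simp only [hha, emb, Sum.elim_inr, Sum.inl.injEq, Sum.inr.injEq, Prod.mk.injEq] at hlb
          exact hl ⟨some p, hlb.1.symm⟩
      · rw [hg₁] at hlb
        simp only [Sum.inl.injEq, Sum.inr.injEq, Prod.mk.injEq] at hlb
        exact hl ⟨none, hlb.1.symm⟩
  · have hedge : G'.Adj (g (Sum.inr (i₀, y))) (g (Sum.inr (i₁, x))) := by
      rw [hg₀, hg₁, hy]
      exact (j none).2
    intro v w hv hw hvw
    rw [sup_adj] at hvw
    rcases hvw with hvw | hvw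
    · rcases v with v | ⟨k, a⟩
      · rcases w with w | ⟨l, b⟩
        · exact hle (by simpa [g] using hvw)
        · simp at hvw
      · obtain ⟨b, rfl, hab⟩ := withCopies_adj_inr.1 hvw
        rcases hrange hv with rfl | rfl
        · rw [hg₀, hg₀]
          exact hembadj _ _ (hadj a b hab)
        · rw [hg₁, hg₁]
          exact hle (by simpa using hab)
    · simp only [fromEdgeSet_adj, Set.mem_singleton_iff, Sym2.eq_iff, ne_eq] at hvw
      rcases hvw with ⟨⟨rfl, rfl⟩ | ⟨rfl, rfl⟩, -⟩
      · exact hedge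
      · exact hedge.symm
  · have hinj' : Function.Injective fun k => (j k).1 := fun _ _ h => hj h
    have h1 := Fintype.card_subtype_compl (· ∈ Set.range fun k => (j k).1)
    have h2 : Fintype.card {i // i ∈ Set.range fun k => (j k).1} = Fintype.card τ + 1 := by
      rw [← Fintype.card_option]
      exact (Fintype.card_congr (Equiv.ofInjective _ hinj')).symm
    rw [Nat.card_eq_fintype_card] at hι ⊢
    rw [Nat.card_eq_fintype_card] at hι
    lia

theorem Rich.shift (hK : SmallTreeBound 𝓕 r K) {T : SimpleGraph (Fin r)} (hT : T.IsTree)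
    {s : ℕ} {U : SimpleGraph (Fin s)} (hUT : Contains T U) (hU : AbsorbsCopies T U) {c : ℕ}
    (h : Rich 𝓕 (K + 2) T c) : Rich 𝓕 (K + 2) T ((c + s) % r) := by
  classical
  obtain ⟨m, G, hG, rfl⟩ := h
  set N := s * r * r + (r + 1) + (K + 2) with hN
  replace hG : FamSaturated 𝓕 (withCopies G T (Fin N)) :=
    hG.withCopies_of_card hK hT.isAcyclic (by simp) (by simp) (by simp [hN])
  have : Nonempty (Fin N) := ⟨⟨0, by lia⟩⟩
  obtain ⟨G', hle, hG'⟩ := (FamFree.withCopies_sum hK hT.isAcyclic (by simp)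
    (by rw [Nat.card_fin]; lia) hUT hG.1).exists_le_famSaturated
  have hatt := card_attached_le hK hT.isAcyclic (by simp)
    (by rw [Nat.card_fin, Nat.card_fin]; lia) hU hG hle hG'.1
  simp only [Nat.card_eq_fintype_card, Fintype.card_fin, Fintype.card_subtype] at hatt
  let Z : Finset (Fin N) := Finset.univ.biUnion fun p : Fin s × Fin r =>
    Finset.univ.filter fun i => G'.Adj (Sum.inr p.1) (Sum.inl (Sum.inr (i, p.2)))
  have hZ : Z.card ≤ s * r * r := by
    refine (Finset.card_biUnion_le_card_mul _ _ r fun p _ => hatt p.1 p.2).trans ?_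
    simp
  have hZc : Fintype.card (Fin (K + 2)) ≤ Fintype.card ↥(Zᶜ) := by
    rw [Fintype.card_fin, Fintype.card_coe, Finset.card_compl, Fintype.card_fin]
    lia
  obtain ⟨e⟩ := Function.Embedding.nonempty_of_card_le hZc
  have hcopies : IsCopies G' T fun p : Fin (K + 2) × Fin r =>
      Sum.inl (Sum.inr ((e p.1).1, p.2)) := by
    refine ⟨?_, ?_⟩
    · rintro ⟨i, a⟩ ⟨j, b⟩ hab
      simpa [Subtype.ext_iff] using hab
    · rintro i a (w | u)
      · have hiff : G'.Adj (Sum.inl (Sum.inr ((e i).1, a))) (Sum.inl w) ↔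
            (withCopies G T (Fin N)).Adj (Sum.inr ((e i).1, a)) w :=
          ⟨fun hw => hG.adj_of_embedding hG'.1 Sum.inl_injective (fun a b hab => hle hab) hw,
            fun hw => hle hw⟩
        rw [hiff, withCopies_adj_inr]
        simp only [Sum.inl.injEq]
      · refine iff_of_false (fun hadj => ?_) (by simp)
        refine Finset.mem_compl.1 (e i).2 (Finset.mem_biUnion.2 ⟨(u, a), Finset.mem_univ _, ?_⟩)
        simpa using hadj.symm
  have hrich := hcopies.rich hG'
  have hmod : Nat.card ((Fin m ⊕ Fin N × Fin r) ⊕ Fin s) % r = (m % r + s) % r := by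
    simp only [Nat.card_sum, Nat.card_prod, Nat.card_fin]
    rw [Nat.mod_add_mod, add_right_comm, Nat.add_mul_mod_self_right]
  rwa [hmod] at hrich

theorem Rich.of_coprime (hK : SmallTreeBound 𝓕 r K) {T : SimpleGraph (Fin r)} (hT : T.IsTree)
    {s : ℕ} {U : SimpleGraph (Fin s)} (hs : Nat.Coprime s r) (hUT : Contains T U)
    (hU : AbsorbsCopies T U) {c d : ℕ} (h : Rich 𝓕 (K + 2) T c) (hd : d < r) :
    Rich 𝓕 (K + 2) T d := by
  have hiter : ∀ k, Rich 𝓕 (K + 2) T ((c + k * s) % r) := by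
    intro k
    induction k with
    | zero =>
      obtain ⟨m, G, hG, rfl⟩ := h
      exact ⟨m, G, hG, by simp⟩
    | succ k ih =>
      have := ih.shift hK hT hUT hU
      rwa [Nat.mod_add_mod, add_assoc, ← Nat.succ_mul] at this
  obtain ⟨t, -, ht⟩ := Nat.exists_mul_mod_eq_of_coprime (d + c * (r - 1)) hs (by lia)
  have heq : (c + t * s) % r = d := by
    rw [mul_comm, Nat.add_mod, ht, ← Nat.add_mod]
    obtain ⟨q, rfl⟩ : ∃ q, r = q + 1 := ⟨r - 1, by lia⟩
    rw [Nat.add_sub_cancel, show c + (d + c * q) = d + c * (q + 1) by ring,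
      Nat.add_mul_mod_self_right, Nat.mod_eq_of_lt hd]
  exact heq ▸ hiter t

end Shift

section ParentLists

/-- Adjacency of `a` and `b` in the tree on `0, 1, …` in which the parent of `b + 1` is entry `b` of
the list `p`. -/
def parentAdj (p : List ℕ) (a b : ℕ) : Bool :=
  (Nat.blt a b && Nat.beq (p.getD (b - 1) 0) a) || (Nat.blt b a && Nat.beq (p.getD (a - 1) 0) b)

/-- The graph on `Fin r` given by the parent list `p`. -/
def parentGraph (p : List ℕ) (r : ℕ) : SimpleGraph (Fin r) where
  Adj a b := parentAdj p a b = true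
  symm := ⟨fun a b h => by
    unfold parentAdj at h ⊢
    rwa [Bool.or_comm]⟩
  loopless := ⟨fun a h => by simp [parentAdj, Nat.blt_eq] at h⟩

theorem parentGraph_adj {p : List ℕ} {r : ℕ} {a b : Fin r} :
    (parentGraph p r).Adj a b ↔ parentAdj p a b = true := Iff.rfl

theorem parentAdj_append {p : List ℕ} {k a b : ℕ} (ha : a ≤ p.length) (hb : b ≤ p.length) :
    parentAdj (p ++ [k]) a b = parentAdj p a b := by
  have key : ∀ c d, d ≤ p.length → (Nat.blt c d && Nat.beq ((p ++ [k]).getD (d - 1) 0) c) =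
      (Nat.blt c d && Nat.beq (p.getD (d - 1) 0) c) := by
    intro c d hd
    by_cases hcd : c < d
    · rw [List.getD_append _ _ _ _ (by lia)]
    · have : Nat.blt c d = false := by rwa [← Bool.not_eq_true, Nat.blt_eq]
      rw [this, Bool.false_and, Bool.false_and]
  rw [parentAdj, parentAdj, key _ _ hb, key _ _ ha]

theorem parentAdj_append_last {p : List ℕ} {k a : ℕ} (ha : a ≤ p.length) :
    parentAdj (p ++ [k]) a (p.length + 1) = true ↔ a = k := by
  have hget : (p ++ [k]).getD (p.length + 1 - 1) 0 = k := by simp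
  rw [parentAdj, hget, Bool.or_eq_true, Bool.and_eq_true, Bool.and_eq_true, Nat.blt_eq, Nat.blt_eq,
    Nat.beq_eq]
  lia

/-- Every tree on `r` vertices is given by one of the parent lists in `L`. -/
def CoversTrees (L : List (List ℕ)) (r : ℕ) : Prop :=
  ∀ T : SimpleGraph (Fin r), T.IsTree →
    ∃ p ∈ L, p.length + 1 = r ∧ Nonempty (parentGraph p r ≃g T)

theorem coversTrees_one : CoversTrees [[]] 1 := by
  intro T _
  refine ⟨[], by simp, rfl, ⟨⟨Equiv.refl _, fun {a b} => ?_⟩⟩⟩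
  rw [Subsingleton.elim a b]
  simp

/-- The parent lists obtained from those in `L` by adding a leaf. -/
def addLeaf (L : List (List ℕ)) (r : ℕ) : List (List ℕ) :=
  L.flatMap fun p => (List.range r).map fun v => p ++ [v]

theorem CoversTrees.addLeaf {L : List (List ℕ)} {r : ℕ} (hr : 1 ≤ r) (hL : CoversTrees L r) :
    CoversTrees (addLeaf L r) (r + 1) := by
  classical
  intro T hT
  have : Nontrivial (Fin (r + 1)) := Fin.nontrivial_iff_two_le.2 (by lia)
  obtain ⟨v, hv⟩ := hT.exists_vert_degree_one_of_nontrivial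
  obtain ⟨u, hvu, huniq⟩ := degree_eq_one_iff_existsUnique_adj.1 hv
  have htree : (T.induce {v}ᶜ).IsTree :=
    ⟨hT.connected.induce_compl_singleton_of_degree_eq_one hv, hT.isAcyclic.induce _⟩
  have hcard : Nat.card ↥({v}ᶜ : Set (Fin (r + 1))) = r := by
    rw [Nat.card_coe_set_eq, Set.ncard_compl, Set.ncard_singleton, Nat.card_fin]
    rfl
  let i := Iso.map (Finite.equivFinOfCardEq hcard) (T.induce {v}ᶜ)
  obtain ⟨p, hp, hlen, ⟨e⟩⟩ := hL _ (i.isTree_iff.1 htree)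
  let f : parentGraph p r ≃g T.induce {v}ᶜ := e.trans i.symm
  let k : Fin r := f.symm ⟨u, hvu.ne'⟩
  have hk : ∀ a, (f a : Fin (r + 1)) = u ↔ a = k := fun a =>
    ⟨fun h => (f.symm_apply_apply a).symm.trans (congrArg f.symm (Subtype.ext h)),
      fun h => by rw [h, RelIso.apply_symm_apply]⟩
  have hlast : ∀ a, T.Adj (f a) v ↔ a = k := fun a => by
    rw [← hk]
    exact ⟨fun h => huniq _ h.symm, fun h => h ▸ hvu.symm⟩
  have hlast' : ∀ a : Fin r, parentAdj (p ++ [k.1]) a r = true ↔ a = k := fun a => by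
    have := parentAdj_append_last (p := p) (k := k) (a := a) (by lia)
    rwa [hlen, ← Fin.ext_iff] at this
  refine ⟨p ++ [k.1], List.mem_flatMap.2 ⟨p, hp, List.mem_map.2 ⟨k, by simp, rfl⟩⟩,
    by simpa using hlen, ?_⟩
  let g : Fin (r + 1) → Fin (r + 1) := Fin.lastCases v fun a => (f a : Fin (r + 1))
  have hg₀ : g (Fin.last r) = v := by simp [g]
  have hg₁ : ∀ a : Fin r, g a.castSucc = f a := fun a => by simp [g]
  have hginj : Function.Injective g := by
    intro a b
    induction a using Fin.lastCases with
    | last =>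
      induction b using Fin.lastCases with
      | last => simp
      | cast b =>
        rw [hg₀, hg₁]
        exact fun h => absurd h.symm (f b).2
    | cast a =>
      induction b using Fin.lastCases with
      | last =>
        rw [hg₀, hg₁]
        exact fun h => absurd h (f a).2
      | cast b =>
        rw [hg₁, hg₁]
        exact fun h => congrArg _ (f.injective (Subtype.ext h))
  refine ⟨⟨Equiv.ofBijective g (Finite.injective_iff_bijective.1 hginj), fun {a b} => ?_⟩⟩
  change T.Adj (g a) (g b) ↔ _
  induction a using Fin.lastCases with
  | last =>
    induction b using Fin.lastCases with
    | last => simp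
    | cast b =>
      rw [hg₀, hg₁, adj_comm, hlast, adj_comm, parentGraph_adj]
      exact (hlast' b).symm
  | cast a =>
    induction b using Fin.lastCases with
    | last =>
      rw [hg₀, hg₁, hlast, parentGraph_adj]
      exact (hlast' a).symm
    | cast b =>
      rw [hg₁, hg₁, parentGraph_adj, Fin.val_castSucc, Fin.val_castSucc,
        parentAdj_append (by lia) (by lia)]
      exact f.map_adj_iff

/-- The neighbours of `a` in the tree with parent list `p`. -/
def parentNbrs (p : List ℕ) (a : ℕ) : List ℕ :=
  (List.range (p.length + 1)).filter (parentAdj p a)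

/-- Evaluates the argument before applying `f`. -/
def force {β : Type} (f : ℕ → β) : ℕ → β
  | 0 => f 0
  | n + 1 => f (n + 1)

theorem force_eq {β : Type} (f : ℕ → β) (n : ℕ) : force f n = f n := by cases n <;> rfl

/-- Backtracking search for an embedding of the tree with parent list `ps`: the images found so far
are in `acc`, latest first, and a complete embedding is accepted if it passes the test `ok`. -/
def findEmbedding (ok : List ℕ → Bool) (nbrs : ℕ → ℕ → List ℕ) : List ℕ → List ℕ → Bool
  | [], acc => ok acc
  | q :: ps, acc => (nbrs acc.length (acc.getD (acc.length - (q + 1)) 0)).any (force fun w =>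
      !acc.any (Nat.beq w) && findEmbedding ok nbrs ps (w :: acc))

theorem exists_of_findEmbedding {ok : List ℕ → Bool} {nbrs : ℕ → ℕ → List ℕ} :
    ∀ {ps acc : List ℕ}, findEmbedding ok nbrs ps acc = true → ∃ l, ok l = true
  | [], acc, h => ⟨acc, h⟩
  | q :: ps, acc, h => by
    simp only [findEmbedding, List.any_eq_true, force_eq, Bool.and_eq_true] at h
    obtain ⟨w, -, -, hw⟩ := h
    exact exists_of_findEmbedding hw

/-- Entry `a` of a list of length `r` stored in reverse. -/
def revGet (r : ℕ) (l : List ℕ) (a : ℕ) : ℕ := l.getD (r - (a + 1)) 0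

/-- All pairs `a, b < r` pass the test `t`. -/
def allPairs (r : ℕ) (t : ℕ → ℕ → Bool) : Bool :=
  (List.range r).all fun a => (List.range r).all fun b => t a b

theorem allPairs_eq_true {r : ℕ} {t : ℕ → ℕ → Bool} :
    allPairs r t = true ↔ ∀ a < r, ∀ b < r, t a b = true := by
  simp [allPairs]

/-- The list `l` takes distinct values at `a ≠ b`. -/
def injAt (r : ℕ) (l : List ℕ) (a b : ℕ) : Bool :=
  !Nat.beq (revGet r l a) (revGet r l b) || Nat.beq a b

theorem injAt_eq_true {r : ℕ} {l : List ℕ} {a b : ℕ} :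
    injAt r l a b = true ↔ (revGet r l a = revGet r l b → a = b) := by
  rw [injAt, Bool.or_eq_true, Bool.not_eq_true', ← Bool.not_eq_true, Nat.beq_eq, Nat.beq_eq,
    imp_iff_not_or]

/-- The number of leaves of the tree with parent list `p`. -/
def leafCount (p : List ℕ) : ℕ :=
  ((List.range (p.length + 1)).filter fun a => Nat.beq (parentNbrs p a).length 1).length

/-- Tests whether the trees on `r` vertices with parent lists `p` and `q` are isomorphic. -/
def isoTest (r : ℕ) (p q : List ℕ) : Bool :=
  Nat.beq (leafCount p) (leafCount q) && (List.range r).any fun v =>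
    findEmbedding (fun l => allPairs r fun a b => Nat.blt (revGet r l a) r && injAt r l a b &&
      (parentAdj p a b == parentAdj q (revGet r l a) (revGet r l b)))
      (fun _ => parentNbrs q) p [v]

theorem nonempty_iso_of_isoTest {r : ℕ} {p q : List ℕ} (h : isoTest r p q = true) :
    Nonempty (parentGraph p r ≃g parentGraph q r) := by
  simp only [isoTest, Bool.and_eq_true, List.any_eq_true] at h
  obtain ⟨-, v, -, hv⟩ := h
  obtain ⟨l, hl⟩ := exists_of_findEmbedding hv
  simp only [allPairs_eq_true, Bool.and_eq_true, Nat.blt_eq, injAt_eq_true, beq_iff_eq] at hl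
  let f : Fin r → Fin r := fun a => ⟨revGet r l a, (hl a a.2 a a.2).1.1⟩
  have hf : Function.Injective f := fun a b hab =>
    Fin.ext ((hl a a.2 b b.2).1.2 (congrArg Fin.val hab))
  refine ⟨⟨Equiv.ofBijective f (Finite.injective_iff_bijective.1 hf), fun {a b} => ?_⟩⟩
  change parentAdj q (revGet r l a) (revGet r l b) = true ↔ parentAdj p a b = true
  rw [(hl a a.2 b b.2).2]

theorem CoversTrees.of_isoTest {L L' : List (List ℕ)} {r : ℕ} (hL : CoversTrees L r)
    (h : (L.all fun p => L'.any fun q => Nat.beq p.length q.length && isoTest r p q) = true) :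
    CoversTrees L' r := by
  intro T hT
  obtain ⟨p, hp, hlen, ⟨e⟩⟩ := hL T hT
  simp only [List.all_eq_true, List.any_eq_true, Bool.and_eq_true, Nat.beq_eq] at h
  obtain ⟨q, hq, hpq, hiso⟩ := h p hp
  obtain ⟨i⟩ := nonempty_iso_of_isoTest hiso
  exact ⟨q, hq, hpq ▸ hlen, ⟨i.symm.trans e⟩⟩

end ParentLists

section AbsorbTest

/-- The code of a vertex of a graph with attached branches, for graphs on at most `8` vertices. -/
def branchCode {s r : ℕ} : Fin s ⊕ Fin r × Fin r → ℕ
  | .inl a => a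
  | .inr (i, b) => 8 * (i + 1) + b

/-- The number `c` is the code of a vertex. -/
def codeValid (s r c : ℕ) : Bool :=
  Nat.blt c s || (Nat.ble 8 c && Nat.ble (c / 8) r && Nat.blt (c % 8) r)

theorem exists_branchCode_eq {s r c : ℕ} (h : codeValid s r c = true) :
    ∃ z : Fin s ⊕ Fin r × Fin r, branchCode z = c := by
  simp only [codeValid, Bool.or_eq_true, Bool.and_eq_true, Nat.blt_eq, Nat.ble_eq] at h
  rcases h with h | ⟨⟨h₁, h₂⟩, h₃⟩
  · exact ⟨.inl ⟨c, h⟩, rfl⟩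
  · refine ⟨.inr (⟨c / 8 - 1, by lia⟩, ⟨c % 8, h₃⟩), ?_⟩
    simp only [branchCode]
    lia

/-- Adjacency of coded vertices when branches with parent list `p` are attached by their vertex `x`
to the vertex `u` of the tree with parent list `q`. -/
def codeAdj (p q : List ℕ) (u x v w : ℕ) : Bool :=
  match v / 8, w / 8 with
  | 0, 0 => parentAdj q (v % 8) (w % 8)
  | 0, _ + 1 => Nat.beq (v % 8) u && Nat.beq (w % 8) x
  | _ + 1, 0 => Nat.beq (w % 8) u && Nat.beq (v % 8) x
  | i + 1, j + 1 => Nat.beq i j && parentAdj p (v % 8) (w % 8)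

theorem branchAdj_of_codeAdj {p q : List ℕ} {s r : ℕ} (hs : s ≤ 8) (hr : r ≤ 8) {u : Fin s}
    {x : Fin r} {z w : Fin s ⊕ Fin r × Fin r}
    (h : codeAdj p q u x (branchCode z) (branchCode w) = true) :
    BranchAdj (parentGraph q s) (parentGraph p r) u x z w := by
  have hl : ∀ a : Fin s, branchCode (r := r) (.inl a) / 8 = 0 ∧
      branchCode (r := r) (.inl a) % 8 = a := fun a => by simp only [branchCode]; lia
  have hi : ∀ (i : Fin r) (b : Fin r), branchCode (s := s) (.inr (i, b)) / 8 = i + 1 ∧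
      branchCode (s := s) (.inr (i, b)) % 8 = b := fun i b => by simp only [branchCode]; lia
  rcases z with a | ⟨i, a⟩ <;> rcases w with b | ⟨j, b⟩ <;>
    simp only [codeAdj, hl, hi, Bool.and_eq_true, Nat.beq_eq, ← Fin.ext_iff] at h <;> exact h

/-- Candidate neighbours of the vertex with code `v`; the index `k` selects a fresh branch. -/
def branchNbrs (p q : List ℕ) (u x k v : ℕ) : List ℕ :=
  match v / 8 with
  | 0 => parentNbrs q v ++ (bif Nat.beq v u then [8 * (k + 1) + x] else [])
  | i + 1 => (bif Nat.beq (v % 8) x then [u] else []) ++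
      (parentNbrs p (v % 8)).map fun b => 8 * (i + 1) + b

/-- Searches for a copy of the tree with parent list `p` through `u`. -/
def absorbTestAt (p q : List ℕ) (s r u x : ℕ) : Bool :=
  (u :: ((List.range r).map (8 + ·) ++ List.range s)).any (force fun v =>
    findEmbedding (fun l => l.any (Nat.beq u) && Nat.beq l.length r &&
      allPairs r fun a b => codeValid s r (revGet r l a) && injAt r l a b &&
        (!parentAdj p a b || codeAdj p q u x (revGet r l a) (revGet r l b)))
      (branchNbrs p q u x) p [v])

theorem exists_of_absorbTestAt {p q : List ℕ} {s r : ℕ} (hs : s ≤ 8) (hr : r ≤ 8) {u : Fin s}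
    {x : Fin r} (h : absorbTestAt p q s r u x = true) :
    ∃ h : Fin r → Fin s ⊕ Fin r × Fin r, Function.Injective h ∧ (∃ y, h y = Sum.inl u) ∧
      ∀ a b, (parentGraph p r).Adj a b →
        BranchAdj (parentGraph q s) (parentGraph p r) u x (h a) (h b) := by
  simp only [absorbTestAt, List.any_eq_true, force_eq] at h
  obtain ⟨v, -, hv⟩ := h
  obtain ⟨l, hl⟩ := exists_of_findEmbedding hv
  simp only [List.any_eq_true, allPairs_eq_true, Bool.and_eq_true, injAt_eq_true, Nat.beq_eq,
    Bool.or_eq_true, Bool.not_eq_true', ← Bool.not_eq_true] at hl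
  obtain ⟨⟨⟨_, hu, rfl⟩, hlen⟩, hl⟩ := hl
  choose f hf using fun a : Fin r => exists_branchCode_eq (hl a a.2 a a.2).1.1
  have hcode : ∀ a b : Fin r, branchCode (f a) = branchCode (f b) → a = b := fun a b hab => by
    rw [hf, hf] at hab
    exact Fin.ext ((hl a a.2 b b.2).1.2 hab)
  refine ⟨f, fun a b hab => hcode a b (congrArg _ hab), ?_, fun a b hab => ?_⟩
  · obtain ⟨n, hn, hnu⟩ := List.getElem_of_mem hu
    refine ⟨⟨r - (n + 1), by lia⟩, ?_⟩
    have hval := hf ⟨r - (n + 1), by lia⟩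
    rw [revGet, show r - (r - (n + 1) + 1) = n by lia, List.getD_eq_getElem _ _ hn, hnu] at hval
    rcases hz : f ⟨r - (n + 1), by lia⟩ with a | ⟨i, b⟩ <;> rw [hz] at hval
    · exact congrArg _ (Fin.ext hval)
    · simp only [branchCode] at hval
      lia
  · have := (hl a a.2 b b.2).2.resolve_left (not_not.2 hab)
    rw [← hf, ← hf] at this
    exact branchAdj_of_codeAdj hs hr this

/-- Tests whether the tree with parent list `p` contains the one with parent list `q`. -/
def containsTest (p q : List ℕ) (s r : ℕ) : Bool :=
  (List.range r).any fun v => findEmbedding (fun l => allPairs s fun a b =>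
    Nat.blt (revGet s l a) r && injAt s l a b &&
      (!parentAdj q a b || parentAdj p (revGet s l a) (revGet s l b)))
    (fun _ => parentNbrs p) q [v]

theorem contains_of_containsTest {p q : List ℕ} {s r : ℕ} (h : containsTest p q s r = true) :
    Contains (parentGraph p r) (parentGraph q s) := by
  simp only [containsTest, List.any_eq_true] at h
  obtain ⟨v, -, hv⟩ := h
  obtain ⟨l, hl⟩ := exists_of_findEmbedding hv
  simp only [allPairs_eq_true, Bool.and_eq_true, injAt_eq_true, Nat.blt_eq,
    Bool.or_eq_true, Bool.not_eq_true', ← Bool.not_eq_true] at hl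
  exact ⟨⟨fun a => ⟨revGet s l a, (hl a a.2 a a.2).1.1⟩, fun a b hab =>
    Fin.ext ((hl a a.2 b b.2).1.2 (congrArg Fin.val hab))⟩, fun a b hab =>
    (hl a a.2 b b.2).2.resolve_left (not_not.2 hab)⟩

/-- Tests whether the tree `q` is contained in and absorbs copies of the tree `p`, and has order
coprime to that of `p`. -/
def absorbTest (r : ℕ) (p q : List ℕ) : Bool :=
  Nat.ble (q.length + 1) 8 && Nat.beq (Nat.gcd (q.length + 1) r) 1 &&
    containsTest p q (q.length + 1) r &&
    (List.range (q.length + 1)).all fun u => (List.range r).all fun x =>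
      absorbTestAt p q (q.length + 1) r u x

theorem AbsorbsCopies.of_iso {σ τ τ' : Type*} {T : SimpleGraph τ} {T' : SimpleGraph τ'}
    {U : SimpleGraph σ} (h : AbsorbsCopies T U) (e : T ≃g T') : AbsorbsCopies T' U := by
  intro u x
  obtain ⟨f, hf, ⟨y, hy⟩, hadj⟩ := h u (e.symm x)
  let m : σ ⊕ τ × τ → σ ⊕ τ' × τ' := Sum.map id (Prod.map e e)
  have hm : Function.Injective m :=
    Function.injective_id.sumMap (e.injective.prodMap e.injective)
  have key : ∀ z w, BranchAdj U T u (e.symm x) z w → BranchAdj U T' u x (m z) (m w) := by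
    rintro (c | ⟨i, c⟩) (d | ⟨j, d⟩) h
    · exact h
    · exact ⟨h.1, (congrArg e h.2).trans (e.apply_symm_apply x)⟩
    · exact ⟨h.1, (congrArg e h.2).trans (e.apply_symm_apply x)⟩
    · exact ⟨congrArg e h.1, e.map_adj_iff.2 h.2⟩
  refine ⟨fun a => m (f (e.symm a)), hm.comp (hf.comp e.symm.injective), ⟨e y, by simp [hy, m]⟩,
    fun a b hab => ?_⟩
  exact key _ _ (hadj _ _ (e.symm.map_adj_iff.2 hab))

/-- Some graph of order coprime to `r` is contained in `T` and absorbs copies of `T`. -/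
def Absorbable {r : ℕ} (T : SimpleGraph (Fin r)) : Prop :=
  ∃ (s : ℕ) (U : SimpleGraph (Fin s)), Nat.Coprime s r ∧ Contains T U ∧ AbsorbsCopies T U

theorem CoversTrees.absorbable {L : List (List ℕ × List ℕ)} {r : ℕ} (hr : r ≤ 8)
    (hL : CoversTrees (L.map Prod.fst) r)
    (h : (L.all fun pq => absorbTest r pq.1 pq.2) = true) {T : SimpleGraph (Fin r)}
    (hT : T.IsTree) : Absorbable T := by
  obtain ⟨_, hp, -, ⟨e⟩⟩ := hL T hT
  obtain ⟨⟨p, q⟩, hpq, rfl⟩ := List.mem_map.1 hp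
  have := List.all_eq_true.1 h _ hpq
  simp only [absorbTest, Bool.and_eq_true, List.all_eq_true, List.mem_range, Nat.beq_eq,
    Nat.ble_eq] at this
  obtain ⟨⟨⟨hq, hgcd⟩, hcont⟩, habs⟩ := this
  refine ⟨q.length + 1, parentGraph q _, hgcd,
    (contains_of_containsTest hcont).trans_injective e e.injective fun a b => e.map_adj_iff.2,
    AbsorbsCopies.of_iso ?_ e⟩
  intro u x
  exact exists_of_absorbTestAt hq hr (habs u u.2 x x.2)

set_option maxRecDepth 100000

theorem coversTrees_two : CoversTrees [[0]] 2 :=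
  (coversTrees_one.addLeaf (by lia)).of_isoTest (by decide +kernel)

theorem coversTrees_three : CoversTrees [[0, 0]] 3 :=
  (coversTrees_two.addLeaf (by lia)).of_isoTest (by decide +kernel)

theorem coversTrees_four : CoversTrees [[0, 0, 0], [0, 0, 1]] 4 :=
  (coversTrees_three.addLeaf (by lia)).of_isoTest (by decide +kernel)

theorem coversTrees_five : CoversTrees [[0, 0, 0, 0], [0, 0, 0, 1], [0, 0, 1, 2]] 5 :=
  (coversTrees_four.addLeaf (by lia)).of_isoTest (by decide +kernel)

theorem coversTrees_six : CoversTrees [[0, 0, 0, 0, 0], [0, 0, 0, 0, 1], [0, 0, 0, 1, 2],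
    [0, 0, 0, 1, 4], [0, 0, 0, 1, 1], [0, 0, 1, 2, 3]] 6 :=
  (coversTrees_five.addLeaf (by lia)).of_isoTest (by decide +kernel)

theorem coversTrees_seven : CoversTrees [[0, 0, 0, 0, 0, 0], [0, 0, 0, 0, 0, 1],
    [0, 0, 0, 0, 1, 2], [0, 0, 0, 1, 2, 3], [0, 0, 0, 0, 1, 5], [0, 0, 0, 1, 2, 4],
    [0, 0, 0, 1, 4, 5], [0, 0, 1, 2, 3, 4], [0, 0, 0, 3, 4, 4], [0, 0, 0, 0, 1, 1],
    [0, 0, 0, 2, 3, 3]] 7 :=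
  (coversTrees_six.addLeaf (by lia)).of_isoTest (by decide +kernel)

/-- Every tree on `1`, `2`, `3`, `4`, `5` or `7` vertices is absorbable: by a single vertex, except
for two trees on `7` vertices which are absorbed by a double star on `6` vertices. -/
theorem absorbable_of_mem {r : ℕ} (hr : r ∈ ({1, 2, 3, 4, 5, 7} : Set ℕ))
    {T : SimpleGraph (Fin r)} (hT : T.IsTree) : Absorbable T := by
  simp only [Set.mem_insert_iff, Set.mem_singleton_iff] at hr
  rcases hr with rfl | rfl | rfl | rfl | rfl | rfl
  · exact CoversTrees.absorbable (L := [([], [])]) (by lia) coversTrees_one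
      (by decide +kernel) hT
  · exact CoversTrees.absorbable (L := [([0], [])]) (by lia) coversTrees_two
      (by decide +kernel) hT
  · exact CoversTrees.absorbable (L := [([0, 0], [])]) (by lia) coversTrees_three
      (by decide +kernel) hT
  · exact CoversTrees.absorbable (L := [([0, 0, 0], []), ([0, 0, 1], [])]) (by lia)
      coversTrees_four (by decide +kernel) hT
  · exact CoversTrees.absorbable (L := [([0, 0, 0, 0], []), ([0, 0, 0, 1], []),
      ([0, 0, 1, 2], [])]) (by lia) coversTrees_five (by decide +kernel) hT
  · exact CoversTrees.absorbable (L := [([0, 0, 0, 0, 0, 0], []), ([0, 0, 0, 0, 0, 1], []),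
      ([0, 0, 0, 0, 1, 2], []), ([0, 0, 0, 1, 2, 3], []), ([0, 0, 0, 0, 1, 5], []),
      ([0, 0, 0, 1, 2, 4], []), ([0, 0, 0, 1, 4, 5], []), ([0, 0, 1, 2, 3, 4], []),
      ([0, 0, 0, 3, 4, 4], []), ([0, 0, 0, 0, 1, 1], [0, 0, 0, 1, 1]),
      ([0, 0, 0, 2, 3, 3], [0, 0, 0, 1, 1])]) (by lia) coversTrees_seven (by decide +kernel) hT

end AbsorbTest

theorem residueClass_of_mem_richClasses {𝓕 : GraphFam} {K : ℕ → ℕ} {r : ℕ} {C : Set ℕ}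
    (hC : C ∈ richClasses 𝓕 K r) : ResidueClass r C := by
  obtain ⟨c, hc, rfl, -⟩ := hC
  exact ⟨c, hc, rfl⟩

/-- If every tree of order `r` is absorbable, the rich classes modulo `r` are none or all. -/
theorem richClasses_eq_empty_or_eq_all {𝓕 : GraphFam} {K : ℕ → ℕ} {r : ℕ}
    (hK : SmallTreeBound 𝓕 r (K r))
    (habs : ∀ T : SimpleGraph (Fin r), T.IsTree → Absorbable T) :
    richClasses 𝓕 K r = ∅ ∨ richClasses 𝓕 K r = {C | ResidueClass r C} := by
  refine (richClasses 𝓕 K r).eq_empty_or_nonempty.imp id ?_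
  rintro ⟨-, c, -, rfl, T, hT, hrich⟩
  obtain ⟨s, U, hs, hUT, hU⟩ := habs T hT
  refine Set.Subset.antisymm (fun C hC => residueClass_of_mem_richClasses hC) ?_
  rintro _ ⟨d, hd, rfl⟩
  exact ⟨d, hd, rfl, T, hT, hrich.of_coprime hK hT hs hUT hU hd⟩

/-- Structure of `sat(n,𝓕)` in the sparse regime, for quasi-finite families. -/
theorem stmt9 (𝓕 : GraphFam) (h1 : 𝓕.Nonempty) (h2 : ∀ F ∈ 𝓕, 1 ≤ Nat.card F.2.edgeSet)
    (h3 : QuasiFinite 𝓕) :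
    ∃ (S : ℕ → Set (Set ℕ)) (k : ℕ → Set ℕ → ℤ),
      (∀ r : ℕ, 1 ≤ r → ∀ C ∈ S r, ResidueClass r C) ∧
      -- (a)
      (∀ r : ℕ, 1 ≤ r → ∀ C ∈ S r,
        ∀ᶠ n : ℕ in atTop,
          (n ∈ C ∧ ∀ q : ℕ, 1 ≤ q → q < r → ∀ D ∈ S q, n ∉ D) →
            (sat n 𝓕 : ℤ) * r = ((r : ℤ) - 1) * n + k r C) ∧
      -- (b)
      (∃ g : ℕ → ℝ, Tendsto (fun n : ℕ => g n / n) atTop (𝓝 0) ∧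
        ∀ n : ℕ, (∀ r : ℕ, 1 ≤ r → ∀ C ∈ S r, n ∉ C) → (n : ℝ) - g n ≤ (sat n 𝓕 : ℝ)) ∧
      -- (c)
      (∀ r ∈ ({1, 2, 3, 4, 5, 7} : Set ℕ), S r = ∅ ∨ S r = {C | ResidueClass r C}) := by
  classical
  choose K hK using h3.exists_smallTreeBound
  refine ⟨richClasses 𝓕 K, fun r C => if hC : C ∈ richClasses 𝓕 K r then
    (exists_eventually_sat_eq h2 hK hC).choose else 0,
    fun r _ C hC => residueClass_of_mem_richClasses hC, fun r _ C hC => ?_, ?_,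
    fun r hr => richClasses_eq_empty_or_eq_all (hK r) fun T hT => absorbable_of_mem hr hT⟩
  · simpa only [dif_pos hC, AvoidsClasses] using (exists_eventually_sat_eq h2 hK hC).choose_spec
  · obtain ⟨g, hg, hsat⟩ := exists_sublinear_deficit (K := K) h2
    exact ⟨g, hg, fun n hn => hsat n fun R q hq _ D hD => hn q hq D hD⟩
end
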